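/- There exists a constant C > 0 such that for every real x ≥ 1 and every nonzero ideal K of ℤ[i], the number of pairs (I, J) of nonzero ideals of ℤ[i] with N(I) ≤ x, N(J) ≤ x and I ⊔ J = K differs from π²x²/(16·ζ_{ℚ(i)}(2)·N(K)²) by at most C·x^(4/3)/N(K)^(4/3). -/

import Mathlib

open Real

/-- The absolute norm of an ideal of `ℤ[i]`: the cardinality of the quotient ring. -/
noncomputable def normI (I : Ideal GaussianInt) : ℕ := Nat.card (GaussianInt ⧸ I)

/-- `P x` : pairs of nonzero ideals of `ℤ[i]` with both norms at most `x`. -/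
noncomputable def P (x : ℝ) : Set (Ideal GaussianInt × Ideal GaussianInt) :=
  {p | p.1 ≠ ⊥ ∧ p.2 ≠ ⊥ ∧ (normI p.1 : ℝ) ≤ x ∧ (normI p.2 : ℝ) ≤ x}

/-- `ζ_{ℚ(i)}(2)`, the sum of `1/N(I)²` over nonzero ideals of `ℤ[i]`. -/
noncomputable def zetaQi2 : ℝ := ∑' I : {I : Ideal GaussianInt // I ≠ ⊥}, 1 / (normI I.1 : ℝ) ^ 2


open Real

lemma osc_half (w w' : ℝ → ℝ) (hw : ∀ θ, HasDerivAt w (w' θ) θ) (hc : Continuous w') {M : ℝ}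
    (hM : ∀ θ, |w θ| ≤ M) (hM' : ∀ θ, |w' θ| ≤ M) {δ ω : ℝ} (hδ : 0 < δ) (hδ1 : δ ≤ 1)
    (hω : ω * δ ^ 2 = 1) (φ : ℝ) :
    |∫ θ in (0:ℝ)..(π / 2), w θ * cos (ω * sin θ + φ)| ≤ 8 * M * δ := by
  have hM0 : 0 ≤ M := (abs_nonneg _).trans (hM 0)
  have hwc : Continuous w := continuous_iff_continuousAt.2 fun θ => (hw θ).continuousAt
  have hπ := Real.pi_gt_three
  have hωp : 0 < ω := by
    by_contra h
    nlinarith [sq_nonneg δ, not_lt.1 h]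
  set c := π / 2 - δ with hcdef
  have hc0 : 0 < c := by linarith
  have hint : ∀ a b : ℝ, IntervalIntegrable (fun θ => w θ * cos (ω * sin θ + φ)) MeasureTheory.volume a b :=
    fun a b => (by fun_prop : Continuous (fun θ => w θ * cos (ω * sin θ + φ))).intervalIntegrable a b
  rw [← intervalIntegral.integral_add_adjacent_intervals (hint 0 c) (hint c (π/2))]
  have h2 : |∫ θ in c..(π / 2), w θ * cos (ω * sin θ + φ)| ≤ M * δ := by
    have := intervalIntegral.norm_integral_le_of_norm_le_const (a := c) (b := π/2) (C := M)
      (f := fun θ => w θ * cos (ω * sin θ + φ)) (by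
        intro θ _
        rw [norm_mul]
        calc ‖w θ‖ * ‖cos (ω * sin θ + φ)‖ ≤ M * 1 := by
              gcongr
              · exact hM θ
              · exact abs_cos_le_one _
          _ = M := mul_one _)
    rw [Real.norm_eq_abs] at this
    have h3 : |π / 2 - c| = δ := by rw [hcdef]; simp [abs_of_pos hδ]
    rwa [h3] at this
  have hsd : δ / 2 ≤ sin δ := by
    have := Real.mul_le_sin hδ.le (by linarith)
    refine le_trans ?_ this
    have : 1 / 2 ≤ 2 / π := by
      rw [div_le_div_iff₀ (by norm_num) (by positivity)]; linarith [Real.pi_le_four]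
    nlinarith
  have hcosc : cos c = sin δ := by rw [hcdef, Real.cos_pi_div_two_sub]
  have hcos : ∀ θ ∈ Set.Icc (0:ℝ) c, 0 < cos θ := fun θ hθ =>
    Real.cos_pos_of_mem_Ioo ⟨by linarith [hθ.1], by linarith [hθ.2]⟩
  have hu : Set.uIcc 0 c = Set.Icc 0 c := Set.uIcc_of_le hc0.le
  -- the correction term
  set g : ℝ → ℝ := fun θ => (w' θ * cos θ + w θ * sin θ) / cos θ ^ 2 * (sin (ω * sin θ + φ) / ω) with hg
  have hder : ∀ θ ∈ Set.uIcc 0 c, HasDerivAt (fun θ => w θ / cos θ * (sin (ω * sin θ + φ) / ω))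
      (w θ * cos (ω * sin θ + φ) + g θ) θ := by
    intro θ hθ
    rw [hu] at hθ
    have hne := (hcos θ hθ).ne'
    have h1 := ((hw θ).div (Real.hasDerivAt_cos θ) hne).mul
      (((((Real.hasDerivAt_sin θ).const_mul ω).add_const φ).sin).div_const ω)
    refine HasDerivAt.congr_deriv h1 ?_
    simp only [hg, Pi.div_apply]
    field_simp
    ring
  have hgc : ContinuousOn g (Set.uIcc 0 c) := by
    rw [hu]
    apply ContinuousOn.mul
    · apply ContinuousOn.div (by fun_prop) (by fun_prop)
      intro θ hθ; exact pow_ne_zero _ (hcos θ hθ).ne'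
    · fun_prop
  have hgi : IntervalIntegrable g MeasureTheory.volume 0 c := hgc.intervalIntegrable
  have hftc := intervalIntegral.integral_eq_sub_of_hasDerivAt hder ((hint 0 c).add hgi)
  rw [intervalIntegral.integral_add (hint 0 c) hgi] at hftc
  have htan : ∫ θ in (0:ℝ)..c, 2 * M / ω * (1 / cos θ ^ 2) = 2 * M / ω * tan c := by
    have := intervalIntegral.integral_eq_sub_of_hasDerivAt (a := 0) (b := c)
      (f := fun θ => 2 * M / ω * tan θ) (f' := fun θ => 2 * M / ω * (1 / cos θ ^ 2)) (by
        intro θ hθ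
        rw [hu] at hθ
        exact (Real.hasDerivAt_tan (hcos θ hθ).ne').const_mul _) (by
        apply ContinuousOn.intervalIntegrable
        rw [hu]
        apply ContinuousOn.mul (by fun_prop)
        apply ContinuousOn.div (by fun_prop) (by fun_prop)
        intro θ hθ; exact pow_ne_zero _ (hcos θ hθ).ne')
    rw [this]; simp
  have hgb : |∫ θ in (0:ℝ)..c, g θ| ≤ 2 * M / ω * tan c := by
    rw [← htan, ← Real.norm_eq_abs]
    apply intervalIntegral.norm_integral_le_of_norm_le hc0.le
    · refine Filter.Eventually.of_forall fun θ hθ => ?_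
      have hp := hcos θ ⟨hθ.1.le, hθ.2⟩
      rw [hg]
      simp only [norm_mul, norm_div, Real.norm_eq_abs]
      rw [abs_of_pos hωp, abs_of_pos (pow_pos hp 2)]
      have e1 : |w' θ * cos θ + w θ * sin θ| ≤ 2 * M := by
        calc _ ≤ |w' θ * cos θ| + |w θ * sin θ| := abs_add_le _ _
          _ = |w' θ| * |cos θ| + |w θ| * |sin θ| := by rw [abs_mul, abs_mul]
          _ ≤ M * 1 + M * 1 := by
            gcongr
            · exact hM' θ
            · exact abs_cos_le_one _
            · exact hM θ
            · exact abs_sin_le_one _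
          _ = 2 * M := by ring
      calc _ ≤ (2 * M) / cos θ ^ 2 * (1 / ω) := by
            gcongr
            exact abs_sin_le_one _
        _ = _ := by ring
    · apply ContinuousOn.intervalIntegrable
      rw [hu]
      apply ContinuousOn.mul (by fun_prop)
      apply ContinuousOn.div (by fun_prop) (by fun_prop)
      intro θ hθ; exact pow_ne_zero _ (hcos θ hθ).ne'
  have hinv : 1 / (ω * δ) = δ := by
    field_simp; linarith
  have htc : 2 * M / ω * tan c ≤ 4 * M * δ := by
    have : tan c ≤ 2 / δ := by
      rw [Real.tan_eq_sin_div_cos, hcosc]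
      calc sin c / sin δ ≤ 1 / (δ / 2) := by
            gcongr; exact sin_le_one _
        _ = 2 / δ := by field_simp
    calc 2 * M / ω * tan c ≤ 2 * M / ω * (2 / δ) := by gcongr
      _ = 4 * M * (1 / (ω * δ)) := by field_simp; ring
      _ = _ := by rw [hinv]
  have hbc : |w c / cos c * (sin (ω * sin c + φ) / ω)| ≤ 2 * M * δ := by
    rw [abs_mul, abs_div, abs_div, abs_of_pos hωp, hcosc, abs_of_pos (by linarith : 0 < sin δ)]
    calc |w c| / sin δ * (|sin (ω * sin c + φ)| / ω) ≤ M / (δ / 2) * (1 / ω) := by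
          gcongr
          · exact hM c
          · exact abs_sin_le_one _
      _ = 2 * M * (1 / (ω * δ)) := by field_simp
      _ = _ := by rw [hinv]
  have hb0 : |w 0 / cos 0 * (sin (ω * sin 0 + φ) / ω)| ≤ M * δ := by
    rw [abs_mul, abs_div, abs_div, abs_of_pos hωp, cos_zero, abs_one, div_one]
    calc |w 0| * (|sin (ω * sin 0 + φ)| / ω) ≤ M * (1 / ω) := by
          gcongr
          · exact hM 0
          · exact abs_sin_le_one _
      _ ≤ M * δ := by
          gcongr
          rw [← hinv]
          gcongr
          nlinarith
  rw [abs_le] at *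
  constructor <;> linarith [h2.1, h2.2, hbc.1, hbc.2, hb0.1, hb0.2, hgb.1, hgb.2]

noncomputable def osc (ω φ : ℝ) (w : ℝ → ℝ) : ℝ :=
  ∫ θ in (-(π / 2))..(π / 2), w θ * cos (ω * sin θ + φ)

lemma osc_bound (w w' : ℝ → ℝ) (hw : ∀ θ, HasDerivAt w (w' θ) θ) (hc : Continuous w') {M : ℝ}
    (hM : ∀ θ, |w θ| ≤ M) (hM' : ∀ θ, |w' θ| ≤ M) {δ ω : ℝ} (hδ : 0 < δ) (hδ1 : δ ≤ 1)
    (hω : ω * δ ^ 2 = 1) (φ : ℝ) :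
    |osc ω φ w| ≤ 16 * M * δ := by
  have hwc : Continuous w := continuous_iff_continuousAt.2 fun θ => (hw θ).continuousAt
  have hint : ∀ a b : ℝ, IntervalIntegrable (fun θ => w θ * cos (ω * sin θ + φ)) MeasureTheory.volume a b :=
    fun a b => (by fun_prop : Continuous (fun θ => w θ * cos (ω * sin θ + φ))).intervalIntegrable a b
  rw [osc, ← intervalIntegral.integral_add_adjacent_intervals (hint (-(π/2)) 0) (hint 0 (π/2))]
  have h1 := osc_half w w' hw hc hM hM' hδ hδ1 hω φ
  have h2 := osc_half (fun θ => w (-θ)) (fun θ => - w' (-θ))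
    (fun θ => by
      have := (hw (-θ)).comp θ (hasDerivAt_neg θ)
      exact this.congr_deriv (by simp)) (by fun_prop) (fun θ => hM _) (fun θ => by simpa using hM' (-θ))
    hδ hδ1 hω (-φ)
  have h3 : ∫ θ in (-(π/2))..0, w θ * cos (ω * sin θ + φ) =
      ∫ θ in (0:ℝ)..(π / 2), w (-θ) * cos (ω * sin θ + -φ) := by
    have := intervalIntegral.integral_comp_neg (a := 0) (b := π/2)
      (fun θ => w θ * cos (ω * sin θ + φ))
    simp only [neg_zero] at this
    rw [← this]
    congr 1
    ext θ
    rw [sin_neg, ← cos_neg (ω * -sin θ + φ)]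
    ring_nf
  rw [h3]
  rw [abs_le] at *
  constructor <;> linarith [h1.1, h1.2, h2.1, h2.2]

lemma osc_ibp (W P P' : ℝ → ℝ) (hW : ∀ θ, W θ = cos θ * P θ) (hP : ∀ θ, HasDerivAt P (P' θ) θ)
    (hc : Continuous P')
    (h0 : P (π / 2) = 0) (h1 : P (-(π / 2)) = 0) {ω : ℝ} (hω : ω ≠ 0) (φ : ℝ) :
    osc ω φ W = - (1 / ω) * osc ω (φ - π / 2) P' := by
  have hPc : Continuous P := continuous_iff_continuousAt.2 fun θ => (hP θ).continuousAt
  have hder : ∀ θ ∈ Set.uIcc (-(π/2)) (π/2), HasDerivAt (fun θ => P θ * (sin (ω * sin θ + φ) / ω))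
      (W θ * cos (ω * sin θ + φ) + (1 / ω) * (P' θ * cos (ω * sin θ + (φ - π / 2)))) θ := by
    intro θ _
    have := (hP θ).mul (((((Real.hasDerivAt_sin θ).const_mul ω).add_const φ).sin).div_const ω)
    refine HasDerivAt.congr_deriv this ?_
    rw [hW, ← add_sub_assoc, cos_sub_pi_div_two]
    field_simp
    ring
  have i1 : IntervalIntegrable (fun θ => W θ * cos (ω * sin θ + φ)) MeasureTheory.volume (-(π/2)) (π/2) := by
    rw [show W = fun θ => cos θ * P θ from funext hW]
    exact (by fun_prop : Continuous _).intervalIntegrable _ _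
  have i2 : IntervalIntegrable (fun θ => (1 / ω) * (P' θ * cos (ω * sin θ + (φ - π / 2))))
      MeasureTheory.volume (-(π/2)) (π/2) :=
    (by fun_prop : Continuous _).intervalIntegrable _ _
  have := intervalIntegral.integral_eq_sub_of_hasDerivAt hder (i1.add i2)
  rw [intervalIntegral.integral_add i1 i2, h0, h1, intervalIntegral.integral_const_mul] at this
  rw [osc, osc]
  linarith

lemma B_bound {δ ω : ℝ} (hδ : 0 < δ) (hδ1 : δ ≤ 1) (hω : ω * δ ^ 2 = 1) :
    |osc ω 0 (fun θ => cos θ ^ 4)| ≤ 96 * δ ^ 5 := by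
  have hω0 : ω ≠ 0 := by rintro rfl; simp at hω
  have e1 := osc_ibp (fun θ => cos θ ^ 4) (fun θ => cos θ ^ 3) (fun θ => -3 * cos θ ^ 2 * sin θ)
    (fun θ => by ring) (fun θ => by
      refine HasDerivAt.congr_deriv ((Real.hasDerivAt_cos θ).pow 3) ?_
      push_cast; ring) (by fun_prop) (by simp) (by simp) hω0 0
  have e2 := osc_ibp (fun θ => -3 * cos θ ^ 2 * sin θ) (fun θ => -3 * (cos θ * sin θ))
    (fun θ => -3 * (cos θ ^ 2 - sin θ ^ 2))
    (fun θ => by ring) (fun θ => by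
      refine HasDerivAt.congr_deriv (((Real.hasDerivAt_cos θ).mul (Real.hasDerivAt_sin θ)).const_mul (-3)) ?_
      ring) (by fun_prop) (by simp) (by simp) hω0 (0 - π / 2)
  have e3 := osc_bound (fun θ => -3 * (cos θ ^ 2 - sin θ ^ 2)) (fun θ => 12 * (cos θ * sin θ))
    (fun θ => by
      refine HasDerivAt.congr_deriv ((((Real.hasDerivAt_cos θ).pow 2).sub ((Real.hasDerivAt_sin θ).pow 2)).const_mul (-3)) ?_
      push_cast; ring) (by fun_prop) (M := 6)
    (fun θ => by
      rw [abs_le]; constructor <;> nlinarith [sin_sq_add_cos_sq θ, sq_nonneg (sin θ), sq_nonneg (cos θ)])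
    (fun θ => by
      rw [abs_le]; constructor <;> nlinarith [sin_sq_add_cos_sq θ, sq_nonneg (sin θ + cos θ), sq_nonneg (sin θ - cos θ)])
    hδ hδ1 hω (0 - π / 2 - π / 2)
  have hi : 1 / ω = δ ^ 2 := by field_simp; linarith
  rw [e1, e2, hi, ← mul_assoc, abs_mul]
  have : |-δ ^ 2 * -δ ^ 2| = δ ^ 4 := by rw [abs_of_nonneg] <;> nlinarith [pow_pos hδ 4]
  rw [this]
  calc _ ≤ δ ^ 4 * (16 * 6 * δ) := by gcongr
    _ = _ := by ring

lemma B'_bound {δ ω : ℝ} (hδ : 0 < δ) (hδ1 : δ ≤ 1) (hω : ω * δ ^ 2 = 1) :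
    |osc ω (π / 2) (fun θ => cos θ ^ 4 * sin θ)| ≤ 576 * δ ^ 5 := by
  have hω0 : ω ≠ 0 := by rintro rfl; simp at hω
  have e1 := osc_ibp (fun θ => cos θ ^ 4 * sin θ) (fun θ => cos θ ^ 3 * sin θ)
    (fun θ => cos θ ^ 4 - 3 * cos θ ^ 2 * sin θ ^ 2)
    (fun θ => by ring) (fun θ => by
      refine HasDerivAt.congr_deriv (((Real.hasDerivAt_cos θ).pow 3).mul (Real.hasDerivAt_sin θ)) ?_
      push_cast; simp only [Pi.pow_apply]; ring) (by fun_prop) (by simp) (by simp) hω0 (π / 2)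
  have e2 := osc_ibp (fun θ => cos θ ^ 4 - 3 * cos θ ^ 2 * sin θ ^ 2)
    (fun θ => cos θ ^ 3 - 3 * (cos θ * sin θ ^ 2))
    (fun θ => -9 * (cos θ ^ 2 * sin θ) + 3 * sin θ ^ 3)
    (fun θ => by ring) (fun θ => by
      refine HasDerivAt.congr_deriv (((Real.hasDerivAt_cos θ).pow 3).sub
        (((Real.hasDerivAt_cos θ).mul ((Real.hasDerivAt_sin θ).pow 2)).const_mul 3)) ?_
      push_cast; simp only [Pi.pow_apply]; ring) (by fun_prop) (by simp) (by simp) hω0 (π / 2 - π / 2)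
  have hb : ∀ a b θ : ℝ, |a * (cos θ ^ 2 * sin θ) + b * sin θ ^ 3| ≤ |a| + |b| := by
    intro a b θ
    refine (abs_add_le _ _).trans ?_
    simp only [abs_mul, abs_pow]
    have h1 := abs_sin_le_one θ
    have h2 := abs_cos_le_one θ
    have : |cos θ| ^ 2 * |sin θ| ≤ 1 := mul_le_one₀ (pow_le_one₀ (abs_nonneg _) h2) (abs_nonneg _) h1
    have h3 : |sin θ| ^ 3 ≤ 1 := pow_le_one₀ (abs_nonneg _) h1
    nlinarith [abs_nonneg a, abs_nonneg b]
  have hb' : ∀ a b θ : ℝ, |a * (sin θ ^ 2 * cos θ) + b * cos θ ^ 3| ≤ |a| + |b| := by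
    intro a b θ
    have := hb a b (π / 2 - θ)
    rwa [cos_pi_div_two_sub, sin_pi_div_two_sub] at this
  have e3 := osc_bound (fun θ => -9 * (cos θ ^ 2 * sin θ) + 3 * sin θ ^ 3)
    (fun θ => 27 * (sin θ ^ 2 * cos θ) + (-9) * cos θ ^ 3)
    (fun θ => by
      refine HasDerivAt.congr_deriv (((((Real.hasDerivAt_cos θ).pow 2).mul (Real.hasDerivAt_sin θ)).const_mul (-9)).add
        (((Real.hasDerivAt_sin θ).pow 3).const_mul 3)) ?_
      push_cast; simp only [Pi.pow_apply]; ring) (by fun_prop) (M := 36)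
    (fun θ => (hb _ _ θ).trans (by norm_num))
    (fun θ => (hb' _ _ θ).trans (by norm_num))
    hδ hδ1 hω (π / 2 - π / 2 - π / 2)
  have hi : 1 / ω = δ ^ 2 := by field_simp; linarith
  rw [e1, e2, hi, ← mul_assoc, abs_mul]
  have : |-δ ^ 2 * -δ ^ 2| = δ ^ 4 := by rw [abs_of_nonneg] <;> nlinarith [pow_pos hδ 4]
  rw [this]
  calc _ ≤ δ ^ 4 * (16 * 36 * δ) := by gcongr
    _ = _ := by ring

noncomputable def BB (ω : ℝ) : ℝ := osc ω 0 (fun θ => cos θ ^ 4)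

lemma BB_deriv (ω : ℝ) : HasDerivAt BB (osc ω (π / 2) (fun θ => cos θ ^ 4 * sin θ)) ω := by
  have := intervalIntegral.hasDerivAt_integral_of_dominated_loc_of_deriv_le
    (μ := MeasureTheory.volume) (a := -(π/2)) (b := π/2) (x₀ := ω) (s := Set.univ)
    (F := fun ω θ => cos θ ^ 4 * cos (ω * sin θ + 0))
    (F' := fun ω θ => cos θ ^ 4 * sin θ * cos (ω * sin θ + π / 2)) (bound := fun _ => 1)
    Filter.univ_mem
    (Filter.Eventually.of_forall fun x => (by fun_prop : Continuous _).aestronglyMeasurable)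
    ((by fun_prop : Continuous _).intervalIntegrable _ _)
    ((by fun_prop : Continuous _).aestronglyMeasurable)
    (Filter.Eventually.of_forall fun θ _ x _ => by
      rw [norm_mul, norm_mul, norm_pow]
      have h1 := abs_sin_le_one θ
      have h2 := abs_cos_le_one θ
      have h3 := abs_cos_le_one (x * sin θ + π / 2)
      exact mul_le_one₀ (mul_le_one₀ (pow_le_one₀ (abs_nonneg _) h2) (abs_nonneg _) h1) (abs_nonneg _) h3)
    intervalIntegrable_const
    (Filter.Eventually.of_forall fun θ _ x _ => by
      have := ((((hasDerivAt_id x).mul_const (sin θ)).add_const 0).cos).const_mul (cos θ ^ 4)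
      refine HasDerivAt.congr_deriv this ?_
      rw [cos_add_pi_div_two]
      simp; ring)
  exact this.2

noncomputable def Phi (t ρ : ℝ) : ℝ := 4 / 3 * t ^ 2 * BB (2 * π * ρ * √t)

lemma Phi_aux {t ρ s : ℝ} (ht : 1 / 2 ≤ t) (hs : 1 ≤ s) (hρ : s ^ 2 ≤ ρ) :
    ∃ δ : ℝ, 0 < δ ∧ δ ≤ 1 ∧ (2 * π * ρ * √t) * δ ^ 2 = 1 ∧ δ ≤ 1 / (s * √√t) := by
  have hπ := Real.pi_gt_three
  have htp : 0 < √t := Real.sqrt_pos.2 (by linarith)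
  have ht2 : 1 / 2 ≤ √t := by
    apply Real.le_sqrt_of_sq_le; linarith
  have hρ1 : 1 ≤ ρ := by nlinarith
  set ω := 2 * π * ρ * √t with hω
  have hω1 : 1 ≤ ω := by
    have : 1 ≤ π * ρ := by nlinarith
    calc (1:ℝ) = 2 * 1 * (1/2) := by norm_num
      _ ≤ 2 * (π * ρ) * √t := by gcongr
      _ = ω := by rw [hω]; ring
  have hωp : 0 < ω := by linarith
  refine ⟨1 / √ω, by positivity, ?_, ?_, ?_⟩
  · rw [div_le_one (by positivity)]
    exact Real.one_le_sqrt.2 hω1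
  · rw [div_pow, Real.sq_sqrt hωp.le]; field_simp
  · have h0 : 0 < √√t := Real.sqrt_pos.2 htp
    apply one_div_le_one_div_of_le (by positivity)
    apply Real.le_sqrt_of_sq_le
    rw [mul_pow, Real.sq_sqrt htp.le, hω]
    gcongr
    nlinarith

lemma Phi_bound {t ρ s : ℝ} (ht : 1 / 2 ≤ t) (hs : 1 ≤ s) (hρ : s ^ 2 ≤ ρ) :
    |Phi t ρ| ≤ 128 * (√√t) ^ 3 / s ^ 5 := by
  obtain ⟨δ, h0, h1, h2, h3⟩ := Phi_aux ht hs hρ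
  have hb := B_bound h0 h1 h2
  have htp : 0 < √t := Real.sqrt_pos.2 (by linarith)
  have hy : 0 < √√t := Real.sqrt_pos.2 htp
  have hty : t = (√√t) ^ 4 := by
    calc t = (√t) ^ 2 := (Real.sq_sqrt (by linarith)).symm
      _ = ((√√t) ^ 2) ^ 2 := by rw [Real.sq_sqrt htp.le]
      _ = _ := by ring
  rw [Phi, BB, abs_mul, abs_of_nonneg (by positivity)]
  calc _ ≤ 4 / 3 * t ^ 2 * (96 * (1 / (s * √√t)) ^ 5) := by
        refine mul_le_mul_of_nonneg_left (hb.trans ?_) (by positivity)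
        gcongr
    _ = 128 * (√√t) ^ 3 / s ^ 5 := by
        nth_rewrite 1 [hty]
        field_simp
        norm_num

lemma Phi_deriv {t ρ s : ℝ} (ht : 1 / 2 ≤ t) (hs : 1 ≤ s) (hρ : s ^ 2 ≤ ρ) :
    ∃ D, HasDerivAt (fun t => Phi t ρ) D t ∧ |D| ≤ 640 * √√t / s ^ 3 := by
  obtain ⟨δ, h0, h1, h2, h3⟩ := Phi_aux ht hs hρ
  have hb := B_bound h0 h1 h2
  have hb' := B'_bound h0 h1 h2
  have htp : 0 < √t := Real.sqrt_pos.2 (by linarith)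
  have ht0 : 0 < t := by linarith
  have hy : 0 < √√t := Real.sqrt_pos.2 htp
  have hty : t = (√√t) ^ 4 := by
    calc t = (√t) ^ 2 := (Real.sq_sqrt (by linarith)).symm
      _ = ((√√t) ^ 2) ^ 2 := by rw [Real.sq_sqrt htp.le]
      _ = _ := by ring
  set ω := 2 * π * ρ * √t with hω
  refine ⟨4 / 3 * t * (2 * BB ω + ω / 2 * osc ω (π / 2) (fun θ => cos θ ^ 4 * sin θ)), ?_, ?_⟩
  · have d1 : HasDerivAt (fun t => 2 * π * ρ * √t) (2 * π * ρ * (1 / (2 * √t))) t :=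
      (Real.hasDerivAt_sqrt ht0.ne').const_mul _
    have d2 := (BB_deriv ω).comp t d1
    have d3 := (((hasDerivAt_id t).pow 2).const_mul (4/3)).mul d2
    refine HasDerivAt.congr_deriv d3 ?_
    simp only [Function.comp, id, Pi.pow_apply]
    rw [← hω]
    set O := osc ω (π / 2) (fun θ => cos θ ^ 4 * sin θ)
    have : t = √t * √t := (Real.mul_self_sqrt ht0.le).symm
    have e : t * (2 * π * ρ * (1 / (2 * √t))) = ω / 2 := by
      rw [hω]
      field_simp
      rw [Real.sq_sqrt ht0.le]
      ring
    push_cast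
    linear_combination (4/3) * t * O * e
  · have hBB : |BB ω| ≤ 96 * δ ^ 3 := by
      refine hb.trans ?_
      have : δ ^ 5 ≤ δ ^ 3 := pow_le_pow_of_le_one h0.le h1 (by norm_num)
      linarith
    have hωp : 0 < ω := by
      by_contra h
      nlinarith [sq_nonneg δ, not_lt.1 h]
    have hO : |ω / 2 * osc ω (π / 2) (fun θ => cos θ ^ 4 * sin θ)| ≤ 288 * δ ^ 3 := by
      rw [abs_mul, abs_of_pos (by positivity)]
      calc _ ≤ ω / 2 * (576 * δ ^ 5) := by gcongr
        _ = 288 * δ ^ 3 * (ω * δ ^ 2) := by ring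
        _ = _ := by rw [h2, mul_one]
    rw [abs_mul, abs_of_nonneg (by positivity)]
    calc _ ≤ 4 / 3 * t * (480 * δ ^ 3) := by
          gcongr
          refine (abs_add_le _ _).trans ?_
          rw [abs_mul, abs_two]
          linarith
      _ ≤ 4 / 3 * t * (480 * (1 / (s * √√t)) ^ 3) := by gcongr
      _ = 640 * √√t / s ^ 3 := by
        nth_rewrite 1 [hty]
        field_simp
        norm_num

lemma Phi_diff1 {a b ρ s : ℝ} (ha : 1 / 2 ≤ a) (hab : a ≤ b) (hs : 1 ≤ s) (hρ : s ^ 2 ≤ ρ) :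
    |Phi b ρ - Phi a ρ| ≤ 256 * (√√b) ^ 3 / s ^ 5 := by
  have h1 := Phi_bound ha hs hρ
  have h2 := Phi_bound (ha.trans hab) hs hρ
  have h3 : 128 * (√√a) ^ 3 / s ^ 5 ≤ 128 * (√√b) ^ 3 / s ^ 5 := by gcongr
  refine (abs_sub _ _).trans ?_
  calc _ ≤ 128 * (√√b) ^ 3 / s ^ 5 + 128 * (√√b) ^ 3 / s ^ 5 := by linarith
    _ = _ := by ring

lemma Phi_diff2 {a b ρ s : ℝ} (ha : 1 / 2 ≤ a) (hab : a ≤ b) (hs : 1 ≤ s) (hρ : s ^ 2 ≤ ρ) :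
    |Phi b ρ - Phi a ρ| ≤ 640 * (b - a) * √√b / s ^ 3 := by
  have hd : ∀ t ∈ Set.Icc a b, ∃ D, HasDerivAt (fun t => Phi t ρ) D t ∧ |D| ≤ 640 * √√b / s ^ 3 := by
    intro t ht
    obtain ⟨D, h1, h2⟩ := Phi_deriv (ha.trans ht.1) hs hρ
    refine ⟨D, h1, h2.trans ?_⟩
    have := ht.2
    gcongr
  have := Convex.norm_image_sub_le_of_norm_deriv_le (f := fun t => Phi t ρ) (s := Set.Icc a b)
    (C := 640 * √√b / s ^ 3) (x := a) (y := b)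
    (fun t ht => by obtain ⟨D, h1, -⟩ := hd t ht; exact h1.differentiableAt)
    (fun t ht => by obtain ⟨D, h1, h2⟩ := hd t ht; rw [h1.deriv]; exact h2)
    (convex_Icc a b) ⟨le_rfl, hab⟩ ⟨hab, le_rfl⟩
  rw [Real.norm_eq_abs, Real.norm_eq_abs, abs_of_nonneg (sub_nonneg.2 hab)] at this
  calc _ ≤ _ := this
    _ = _ := by ring

/-- one-dimensional sum -/
lemma min_sum {α β : ℝ} (hα : 0 < α) (hβ : 0 < β) (M : ℕ) :
    ∑ m ∈ Finset.range (M + 1), (m : ℝ) * min (α / √m ^ 5) (β / √m ^ 3) ≤ 8 * √(α * β) := by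
  set τ := √(α / β) with hτ
  have hτp : 0 < τ := Real.sqrt_pos.2 (by positivity)
  set g := √(α * β) with hg
  have hgp : 0 < g := Real.sqrt_pos.2 (by positivity)
  have hα' : α = g * τ := by
    rw [hg, hτ, ← Real.sqrt_mul (by positivity)]
    rw [show α * β * (α / β) = α ^ 2 by field_simp]
    exact (Real.sqrt_sq hα.le).symm
  have hβ' : β * τ = g := by
    have : β * τ ^ 2 = α := by rw [hτ, Real.sq_sqrt (by positivity)]; field_simp
    nlinarith
  suffices h : ∑ m ∈ Finset.range (M + 1), (m : ℝ) * min (α / √m ^ 5) (β / √m ^ 3)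
      ≤ 8 * g * (√M / (τ + √M)) by
    refine h.trans ?_
    have : √(M:ℝ) / (τ + √M) ≤ 1 := by
      rw [div_le_one (by positivity)]; linarith
    nlinarith
  induction M with
  | zero => simp
  | succ M ih =>
    rw [Finset.sum_range_succ]
    set u := √(M : ℝ) with hu
    set v := √((M + 1 : ℕ) : ℝ) with hv
    have hu0 : 0 ≤ u := Real.sqrt_nonneg _
    have hv2 : v ^ 2 = ((M + 1 : ℕ) : ℝ) := Real.sq_sqrt (by positivity)
    have hu2 : u ^ 2 = (M : ℝ) := Real.sq_sqrt (by positivity)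
    have hvp : 0 < v := Real.sqrt_pos.2 (by positivity)
    have huv : u ≤ v := Real.sqrt_le_sqrt (by push_cast; linarith)
    have hd : v ^ 2 - u ^ 2 = 1 := by rw [hv2, hu2]; push_cast; ring
    have hstep : ((M + 1 : ℕ) : ℝ) * min (α / v ^ 5) (β / v ^ 3) ≤
        8 * g * (v / (τ + v)) - 8 * g * (u / (τ + u)) := by
      have e : 8 * g * (v / (τ + v)) - 8 * g * (u / (τ + u)) =
          8 * g * τ * (v - u) / ((τ + v) * (τ + u)) := by
        field_simp; ring
      have e2 : 4 * g * τ / (v * (τ + v) ^ 2) ≤ 8 * g * τ * (v - u) / ((τ + v) * (τ + u)) := by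
        have : v - u = 1 / (v + u) := by field_simp; linarith
        rw [this]
        rw [show 8 * g * τ * (1 / (v + u)) / ((τ + v) * (τ + u)) =
          4 * g * τ * (2 / ((v + u) * ((τ + v) * (τ + u)))) by field_simp; ring]
        rw [show 4 * g * τ / (v * (τ + v) ^ 2) = 4 * g * τ * (2 / ((v + v) * ((τ + v) * (τ + v)))) by
          field_simp; ring]
        gcongr
      rw [e]
      refine le_trans ?_ e2
      rw [← hv2]
      rcases le_total τ v with h | h
      · calc v ^ 2 * min (α / v ^ 5) (β / v ^ 3) ≤ v ^ 2 * (α / v ^ 5) := by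
              gcongr; exact min_le_left _ _
          _ = 4 * g * τ / (v * (v + v) ^ 2) := by rw [hα']; field_simp; ring
          _ ≤ _ := by gcongr
      · calc v ^ 2 * min (α / v ^ 5) (β / v ^ 3) ≤ v ^ 2 * (β / v ^ 3) := by
              gcongr; exact min_le_right _ _
          _ = 4 * g * τ / (v * (τ + τ) ^ 2) := by rw [← hβ']; field_simp; ring
          _ ≤ _ := by gcongr
    linarith

lemma lattice_sum {α β : ℝ} (hα : 0 < α) (hβ : 0 < β) (f : ℤ × ℤ → ℝ) (hf0 : f 0 = 0)
    (hf : ∀ m : ℕ, 1 ≤ m → ∀ p : ℤ × ℤ, max p.1.natAbs p.2.natAbs = m →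
      |f p| ≤ α / √m ^ 5 ∧ |f p| ≤ β / √m ^ 3) :
    Summable f ∧ |∑' p, f p| ≤ 64 * √(α * β) := by
  have key : ∀ s : Finset (ℤ × ℤ), ∑ p ∈ s, |f p| ≤ 64 * √(α * β) := by
    intro s
    obtain ⟨M, hM⟩ : ∃ M : ℕ, ∀ p ∈ s, max p.1.natAbs p.2.natAbs ≤ M :=
      ⟨s.sup fun p => max p.1.natAbs p.2.natAbs, fun p hp =>
        Finset.le_sup (f := fun p : ℤ × ℤ => max p.1.natAbs p.2.natAbs) hp⟩
    rw [← Finset.sum_fiberwise_of_maps_to (t := Finset.range (M + 1))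
      (g := fun p : ℤ × ℤ => max p.1.natAbs p.2.natAbs)
      (fun p hp => Finset.mem_range.2 (Nat.lt_succ_of_le (hM p hp)))]
    calc _ ≤ ∑ m ∈ Finset.range (M + 1), 8 * ((m : ℝ) * min (α / √m ^ 5) (β / √m ^ 3)) := by
          apply Finset.sum_le_sum
          intro m _
          rcases Nat.eq_zero_or_pos m with rfl | hm
          · simp only [Nat.cast_zero, zero_mul, mul_zero]
            apply le_of_eq
            apply Finset.sum_eq_zero
            intro p hp
            have := (Finset.mem_filter.1 hp).2
            have hp0 : p = 0 := by
              ext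
              · simp; omega
              · simp; omega
            rw [hp0, hf0, abs_zero]
          · have hsub : (s.filter fun p => max p.1.natAbs p.2.natAbs = m) ⊆ Finset.box m := by
              intro p hp
              rw [Int.mem_box]
              exact (Finset.mem_filter.1 hp).2
            have hcard := (Finset.card_le_card hsub).trans_eq (Int.card_box hm.ne')
            calc _ ≤ (s.filter fun p => max p.1.natAbs p.2.natAbs = m).card •
                  min (α / √m ^ 5) (β / √m ^ 3) := by
                  apply Finset.sum_le_card_nsmul
                  intro p hp
                  have := hf m hm p (Finset.mem_filter.1 hp).2
                  exact le_min this.1 this.2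
              _ ≤ (8 * m) • min (α / √m ^ 5) (β / √m ^ 3) := by
                  apply nsmul_le_nsmul_left _ hcard
                  apply le_min <;> positivity
              _ = _ := by rw [nsmul_eq_mul]; push_cast; ring
      _ ≤ _ := by
          rw [← Finset.mul_sum]
          linarith [min_sum hα hβ M]
  have hs : Summable fun p => |f p| := summable_of_sum_le (fun _ => abs_nonneg _) key
  refine ⟨hs.of_abs, ?_⟩
  have h1 := norm_tsum_le_tsum_norm (f := f) hs
  exact h1.trans (hs.tsum_le_of_sum_le key)

noncomputable def rad (p : ℤ × ℤ) : ℝ := √((p.1 : ℝ) ^ 2 + (p.2 : ℝ) ^ 2)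

lemma rad_ge {m : ℕ} {p : ℤ × ℤ} (h : max p.1.natAbs p.2.natAbs = m) : (√m) ^ 2 ≤ rad p := by
  rw [Real.sq_sqrt (by positivity), rad]
  apply Real.le_sqrt_of_sq_le
  have h1 : ∀ z : ℤ, (z : ℝ) ^ 2 = (z.natAbs : ℝ) ^ 2 := by
    intro z
    rw [Nat.cast_natAbs, Int.cast_abs, sq_abs]
  rw [h1, h1]
  rcases max_choice p.1.natAbs p.2.natAbs with h' | h' <;> rw [← h, h'] <;> nlinarith [sq_nonneg (p.1.natAbs : ℝ), sq_nonneg (p.2.natAbs : ℝ)]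

noncomputable def Phi0 (t : ℝ) (p : ℤ × ℤ) : ℝ := if p = 0 then 0 else Phi t (rad p)

lemma ne_zero_of_max {m : ℕ} (hm : 1 ≤ m) {p : ℤ × ℤ} (h : max p.1.natAbs p.2.natAbs = m) : p ≠ 0 := by
  rintro rfl
  simp at h
  omega

lemma Phi0_summable {t : ℝ} (ht : 1 / 2 ≤ t) : Summable (Phi0 t) := by
  have hy : 0 < √√t := Real.sqrt_pos.2 (Real.sqrt_pos.2 (by linarith))
  refine (lattice_sum (α := 128 * (√√t) ^ 3) (β := 128 * (√√t) ^ 3) (by positivity) (by positivity)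
    (Phi0 t) (by simp [Phi0]) ?_).1
  intro m hm p hp
  rw [Phi0, if_neg (ne_zero_of_max hm hp)]
  have hs : (1:ℝ) ≤ √m := Real.one_le_sqrt.2 (by exact_mod_cast hm)
  have := Phi_bound ht hs (rad_ge hp)
  refine ⟨this, this.trans ?_⟩
  gcongr <;> first | assumption | norm_num

lemma Phi0_diff {a b : ℝ} (ha : 1 / 2 ≤ a) (hab : a < b) :
    |∑' p, Phi0 b p - ∑' p, Phi0 a p| ≤ 64 * √(163840 * (b - a) * b) := by
  have hy : 0 < √√b := Real.sqrt_pos.2 (Real.sqrt_pos.2 (by linarith))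
  have hd : 0 < b - a := sub_pos.2 hab
  rw [← (Phi0_summable (ha.trans hab.le)).tsum_sub (Phi0_summable ha)]
  have := (lattice_sum (α := 256 * (√√b) ^ 3) (β := 640 * (b - a) * √√b) (by positivity) (by positivity)
    (fun p => Phi0 b p - Phi0 a p) (by simp [Phi0]) ?_).2
  · refine this.trans_eq ?_
    congr 2
    have : b = (√√b) ^ 4 := by
      calc b = (√b) ^ 2 := (Real.sq_sqrt (by linarith)).symm
        _ = ((√√b) ^ 2) ^ 2 := by rw [Real.sq_sqrt (Real.sqrt_nonneg _)]
        _ = _ := by ring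
    calc _ = 163840 * (b - a) * (√√b) ^ 4 := by ring
      _ = _ := by rw [← this]
  intro m hm p hp
  simp only [Phi0, if_neg (ne_zero_of_max hm hp)]
  have hs : (1:ℝ) ≤ √m := Real.one_le_sqrt.2 (by exact_mod_cast hm)
  exact ⟨Phi_diff1 ha hab.le hs (rad_ge hp), Phi_diff2 ha hab.le hs (rad_ge hp)⟩

open MeasureTheory FourierTransform

/-- the truncated paraboloid -/
noncomputable def par (x u v : ℝ) : ℝ := max (x - u ^ 2 - v ^ 2) 0

lemma par_cont (x : ℝ) : Continuous fun p : ℝ × ℝ => par x p.1 p.2 := by unfold par; fun_prop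

lemma par_zero {x u v : ℝ} (h : x ≤ u ^ 2 + v ^ 2) : par x u v = 0 := by
  unfold par; exact max_eq_right (by linarith)

lemma sq_ge_of_notMem {R v : ℝ} (hR : 0 ≤ R) (hv : v ∉ Set.Ioc (-R) R) : R ^ 2 ≤ v ^ 2 := by
  rw [Set.mem_Ioc, not_and_or, not_lt, not_le] at hv
  rcases hv with h | h <;> nlinarith

lemma hasCompactSupport_of_Ioc {E : Type*} [Zero E] {h : ℝ → E} {R : ℝ}
    (hs : ∀ v, v ∉ Set.Ioc (-R) R → h v = 0) : HasCompactSupport h :=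
  HasCompactSupport.intro (isCompact_Icc (a := -R) (b := R)) fun v hv =>
    hs v fun h' => hv ⟨h'.1.le, h'.2⟩

/-- Fourier transform of an even compactly supported real function. -/
lemma fourier_even {h : ℝ → ℝ} (hc : Continuous h) (he : ∀ v, h (-v) = h v) {R : ℝ} (hR : 0 ≤ R)
    (hs : ∀ v, v ∉ Set.Ioc (-R) R → h v = 0) (ξ : ℝ) :
    𝓕 (fun v => (h v : ℂ)) ξ = ((∫ v in (-R)..R, h v * cos (2 * π * ξ * v) : ℝ) : ℂ) := by
  have hcs : HasCompactSupport h := hasCompactSupport_of_Ioc hs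
  have hint : ∀ η : ℝ, Integrable fun v : ℝ => Complex.exp ((-2 * π * v * η : ℝ) * Complex.I) • (h v : ℂ) := by
    intro η
    apply Continuous.integrable_of_hasCompactSupport
    · fun_prop
    · exact HasCompactSupport.intro (isCompact_Icc (a := -R) (b := R)) fun v hv => by
        rw [hs v fun h' => hv ⟨h'.1.le, h'.2⟩]; simp
  have e1 : 𝓕 (fun v => (h v : ℂ)) (-ξ) = 𝓕 (fun v => (h v : ℂ)) ξ := by
    rw [Real.fourier_real_eq_integral_exp_smul, Real.fourier_real_eq_integral_exp_smul]
    rw [← integral_neg_eq_self]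
    congr 1
    ext v
    rw [he]
    simp
  have e2 : 𝓕 (fun v => (h v : ℂ)) ξ + 𝓕 (fun v => (h v : ℂ)) (-ξ) =
      2 * ((∫ v, h v * cos (2 * π * ξ * v) : ℝ) : ℂ) := by
    rw [Real.fourier_real_eq_integral_exp_smul, Real.fourier_real_eq_integral_exp_smul,
      ← integral_add (hint _) (hint _), ← integral_complex_ofReal, ← integral_const_mul]
    congr 1
    ext v
    push_cast
    rw [Complex.cos]
    simp only [smul_eq_mul]
    rw [show (-2 * (π:ℂ) * v * ξ) * Complex.I = -(2 * π * ξ * v) * Complex.I by ring,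
      show (-2 * (π:ℂ) * v * -ξ) * Complex.I = (2 * π * ξ * v) * Complex.I by ring]
    ring
  have e3 : ∫ v, h v * cos (2 * π * ξ * v) = ∫ v in (-R)..R, h v * cos (2 * π * ξ * v) := by
    rw [intervalIntegral.integral_of_le (by linarith)]
    rw [setIntegral_eq_integral_of_forall_compl_eq_zero]
    intro v hv
    rw [hs v hv, zero_mul]
  rw [e1, e3] at e2
  linear_combination e2 / 2

lemma par_supp {x : ℝ} (hx : 0 ≤ x) (u v : ℝ) (hv : v ∉ Set.Ioc (-√x) √x) : par x u v = 0 := by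
  apply par_zero
  have := sq_ge_of_notMem (Real.sqrt_nonneg x) hv
  rw [Real.sq_sqrt hx] at this
  nlinarith [sq_nonneg u]

lemma par_fourier {x : ℝ} (hx : 0 ≤ x) (u ξ : ℝ) :
    𝓕 (fun v => (par x u v : ℂ)) ξ = ((∫ v in (-√x)..√x, par x u v * cos (2 * π * ξ * v) : ℝ) : ℂ) :=
  fourier_even (by unfold par; fun_prop) (fun v => by simp [par]) (Real.sqrt_nonneg x)
    (par_supp hx u) ξ

/-- partial Fourier transform -/
noncomputable def gg (x ξ u : ℝ) : ℝ := ∫ v in (-√x)..√x, par x u v * cos (2 * π * ξ * v)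

lemma gg_cont (x ξ : ℝ) : Continuous (gg x ξ) := by
  unfold gg
  apply intervalIntegral.continuous_parametric_intervalIntegral_of_continuous'
  unfold par
  simp only [Function.uncurry_def]
  fun_prop

lemma gg_even (x ξ u : ℝ) : gg x ξ (-u) = gg x ξ u := by simp [gg, par]

lemma gg_zero {x : ℝ} (ξ : ℝ) {u : ℝ} (hu : x ≤ u ^ 2) : gg x ξ u = 0 := by
  unfold gg
  rw [intervalIntegral.integral_congr (g := fun _ => 0)]
  · simp
  · intro v _
    simp only
    rw [par_zero (by nlinarith [sq_nonneg v]), zero_mul]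

lemma gg_supp {x : ℝ} (hx : 0 ≤ x) (ξ u : ℝ) (hu : u ∉ Set.Ioc (-√x) √x) : gg x ξ u = 0 := by
  apply gg_zero
  have := sq_ge_of_notMem (Real.sqrt_nonneg x) hu
  rwa [Real.sq_sqrt hx] at this

lemma gg_eq {x u : ℝ} (hu : u ^ 2 ≤ x) (ξ : ℝ) :
    gg x ξ u = ∫ v in (-√(x - u ^ 2))..√(x - u ^ 2), (x - u ^ 2 - v ^ 2) * cos (2 * π * ξ * v) := by
  have hx : 0 ≤ x := (sq_nonneg u).trans hu
  set s := √(x - u ^ 2) with hs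
  have hs0 : 0 ≤ s := Real.sqrt_nonneg _
  have hs2 : s ^ 2 = x - u ^ 2 := Real.sq_sqrt (by linarith)
  have h0 : ∀ v, v ∉ Set.Ioc (-s) s → par x u v = 0 := by
    intro v hv
    have := sq_ge_of_notMem hs0 hv
    exact par_zero (by linarith)
  have e1 : gg x ξ u = ∫ v, par x u v * cos (2 * π * ξ * v) := by
    rw [gg, intervalIntegral.integral_of_le (by linarith [Real.sqrt_nonneg x]),
      setIntegral_eq_integral_of_forall_compl_eq_zero]
    intro v hv
    rw [par_supp hx u v hv, zero_mul]
  rw [e1, ← setIntegral_eq_integral_of_forall_compl_eq_zero (s := Set.Ioc (-s) s),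
    ← intervalIntegral.integral_of_le (by linarith)]
  · apply intervalIntegral.integral_congr
    intro v hv
    rw [Set.uIcc_of_le (by linarith)] at hv
    have : v ^ 2 ≤ s ^ 2 := sq_le_sq' hv.1 hv.2
    simp only [par]
    rw [max_eq_left (by linarith)]
  · intro v hv
    rw [h0 v hv, zero_mul]

lemma gg_bound (x u : ℝ) (hx : 0 ≤ x) : ∃ C : ℝ, ∀ ξ : ℝ, 1 ≤ |ξ| → |gg x ξ u| ≤ C / ξ ^ 2 := by
  by_cases hu : u ^ 2 ≤ x
  swap
  · refine ⟨0, fun ξ _ => ?_⟩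
    rw [gg_zero ξ (not_le.1 hu).le]; simp
  set s := √(x - u ^ 2) with hs
  have hs0 : 0 ≤ s := Real.sqrt_nonneg _
  have hs2 : s ^ 2 = x - u ^ 2 := Real.sq_sqrt (by linarith)
  refine ⟨4 * s + 4, fun ξ hξ => ?_⟩
  have hξ0 : ξ ≠ 0 := by rintro rfl; norm_num at hξ
  have hπ := Real.pi_gt_three
  set ω := 2 * π * ξ with hω
  have hω0 : ω ≠ 0 := by positivity
  have hint := intervalIntegral.integral_eq_sub_of_hasDerivAt (a := -s) (b := s)
    (f := fun v => (s ^ 2 - v ^ 2) * (sin (ω * v) / ω) - 2 / ω ^ 2 * (v * cos (ω * v)) + 2 / ω ^ 3 * sin (ω * v))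
    (f' := fun v => (x - u ^ 2 - v ^ 2) * cos (ω * v)) (by
      intro v _
      have dl : HasDerivAt (fun v => ω * v) (ω * 1) v := (hasDerivAt_id v).const_mul ω
      have := (((((hasDerivAt_id v).pow 2).const_sub (s ^ 2)).mul (dl.sin.div_const ω)).sub
        (((hasDerivAt_id v).mul dl.cos).const_mul (2 / ω ^ 2))).add (dl.sin.const_mul (2 / ω ^ 3))
      refine HasDerivAt.congr_deriv this ?_
      simp only [id, Pi.pow_apply]
      rw [← hs2]
      push_cast
      field_simp
      ring) ((by fun_prop : Continuous _).intervalIntegrable _ _)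
  rw [gg_eq hu, ← hω, ← hs, hint]
  have e : (s ^ 2 - s ^ 2) * (sin (ω * s) / ω) - 2 / ω ^ 2 * (s * cos (ω * s)) + 2 / ω ^ 3 * sin (ω * s) -
    ((s ^ 2 - (-s) ^ 2) * (sin (ω * -s) / ω) - 2 / ω ^ 2 * (-s * cos (ω * -s)) + 2 / ω ^ 3 * sin (ω * -s))
    = (-(4 * s * cos (ω * s)) + 4 * (sin (ω * s) / ω)) / ω ^ 2 := by
    rw [mul_neg, sin_neg, cos_neg]
    field_simp
    ring
  rw [e, abs_div, abs_of_nonneg (sq_nonneg ω)]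
  have hωξ : |ξ| ≤ |ω| := by
    rw [hω, abs_mul, abs_of_pos (by positivity : 0 < 2 * π)]
    nlinarith [abs_nonneg ξ]
  have hω2 : ξ ^ 2 ≤ ω ^ 2 := sq_le_sq.2 hωξ
  have hn : |-(4 * s * cos (ω * s)) + 4 * (sin (ω * s) / ω)| ≤ 4 * s + 4 := by
    refine (abs_add_le _ _).trans ?_
    rw [abs_neg, abs_mul (4 * s), abs_mul 4 (_ / _), abs_div, abs_of_nonneg (by positivity : 0 ≤ 4 * s), abs_of_pos (by norm_num : (0:ℝ) < 4)]
    have h1 := abs_cos_le_one (ω * s)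
    have h2 : |sin (ω * s)| / |ω| ≤ 1 := by
      rw [div_le_one (by positivity)]
      exact (abs_sin_le_one _).trans (hξ.trans hωξ)
    nlinarith
  gcongr

lemma isBigO_of_Ioc {h : ℝ → ℂ} {R : ℝ} (hs : ∀ v, v ∉ Set.Ioc (-R) R → h v = 0) :
    h =O[Filter.cocompact ℝ] fun x => |x| ^ (-2 : ℝ) := by
  have : h =ᶠ[Filter.cocompact ℝ] fun _ => 0 := by
    have := (isCompact_Icc (a := -R) (b := R)).compl_mem_cocompact
    filter_upwards [this] with v hv
    exact hs v fun h' => hv ⟨h'.1.le, h'.2⟩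
  exact this.trans_isBigO (Asymptotics.isBigO_zero _ _)

lemma poisson_Ioc {h : ℝ → ℂ} (hc : Continuous h) {R : ℝ} (hs : ∀ v, v ∉ Set.Ioc (-R) R → h v = 0)
    (hsum : Summable fun n : ℤ => 𝓕 h (n : ℝ)) : ∑' n : ℤ, h n = ∑' n : ℤ, 𝓕 h (n : ℝ) := by
  have := Real.tsum_eq_tsum_fourier_of_rpow_decay_of_summable hc one_lt_two (isBigO_of_Ioc hs) hsum 0
  simpa using this

lemma gg_summable {x : ℝ} (hx : 0 ≤ x) (u : ℝ) : Summable fun l : ℤ => gg x l u := by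
  obtain ⟨C, hC⟩ := gg_bound x u hx
  have h1 : Summable fun l : ℤ => C * (1 / (l : ℝ) ^ 2) :=
    (Real.summable_one_div_int_pow.2 one_lt_two).mul_left C
  refine Summable.of_norm_bounded_eventually h1 ?_
  have : {l : ℤ | ¬ ‖gg x l u‖ ≤ C * (1 / (l : ℝ) ^ 2)} ⊆ {0} := by
    intro l hl
    by_contra h0
    apply hl
    rw [Real.norm_eq_abs, mul_one_div]
    apply hC
    have : 1 ≤ |l| := Int.one_le_abs h0
    exact_mod_cast this
  exact (Set.finite_singleton 0).subset this

lemma poisson1 {x : ℝ} (hx : 0 ≤ x) (u : ℝ) : ∑' b : ℤ, par x u b = ∑' l : ℤ, gg x l u := by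
  have h := poisson_Ioc (h := fun v => (par x u v : ℂ)) (by unfold par; fun_prop) (R := √x)
    (fun v hv => by simp [par_supp hx u v hv]) (by
      simp_rw [par_fourier hx]
      exact Complex.hasSum_ofReal.2 (gg_summable hx u).hasSum |>.summable)
  simp_rw [par_fourier hx] at h
  rw [← Complex.ofReal_tsum, ← Complex.ofReal_tsum] at h
  exact_mod_cast h

noncomputable def I2 (x a b : ℝ) : ℂ :=
  ∫ p : ℝ × ℝ, Complex.exp ((-2 * π * (a * p.1 + b * p.2) : ℝ) * Complex.I) * (par x p.1 p.2 : ℂ)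

lemma I2_integrable {x : ℝ} (hx : 0 ≤ x) (a b : ℝ) : Integrable fun p : ℝ × ℝ =>
    Complex.exp ((-2 * π * (a * p.1 + b * p.2) : ℝ) * Complex.I) * (par x p.1 p.2 : ℂ) := by
  apply Continuous.integrable_of_hasCompactSupport
  · have := par_cont x
    fun_prop
  · refine HasCompactSupport.intro ((isCompact_Icc (a := -√x) (b := √x)).prod (isCompact_Icc (a := -√x) (b := √x))) ?_
    intro p hp
    have : par x p.1 p.2 = 0 := by
      rw [Set.mem_prod, not_and_or] at hp
      rcases hp with h | h
      · have := sq_ge_of_notMem (Real.sqrt_nonneg x) fun h' => h ⟨h'.1.le, h'.2⟩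
        rw [Real.sq_sqrt hx] at this
        exact par_zero (by nlinarith [sq_nonneg p.2])
      · exact par_supp hx _ _ fun h' => h ⟨h'.1.le, h'.2⟩
    simp [this]

lemma fourier_gg {x : ℝ} (hx : 0 ≤ x) (a b : ℝ) : 𝓕 (fun u => (gg x b u : ℂ)) a = I2 x a b := by
  rw [I2, Measure.volume_eq_prod, integral_prod _ (I2_integrable hx a b),
    Real.fourier_real_eq_integral_exp_smul]
  congr 1
  ext u
  rw [gg, ← par_fourier hx, Real.fourier_real_eq_integral_exp_smul, smul_eq_mul, ← integral_const_mul]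
  congr 1
  ext v
  rw [smul_eq_mul, ← mul_assoc, ← Complex.exp_add]
  congr 2
  push_cast
  ring

lemma I2_complex (x a b : ℝ) : I2 x a b =
    ∫ z : ℂ, Complex.exp ((-2 * π * (a * z.re + b * z.im) : ℝ) * Complex.I) *
      ((max (x - ‖z‖ ^ 2) 0 : ℝ) : ℂ) := by
  rw [I2, ← Complex.volume_preserving_equiv_real_prod.integral_comp'
    (g := fun p : ℝ × ℝ => Complex.exp ((-2 * π * (a * p.1 + b * p.2) : ℝ) * Complex.I) * (par x p.1 p.2 : ℂ))]
  congr 1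
  ext z
  simp only [Complex.measurableEquivRealProd_apply, par]
  rw [← Complex.normSq_eq_norm_sq, Complex.normSq_apply]
  ring_nf

lemma I2_rot (x a b : ℝ) : I2 x a b = I2 x (√(a ^ 2 + b ^ 2)) 0 := by
  rcases eq_or_ne (a ^ 2 + b ^ 2) 0 with h | h
  · have ha : a = 0 := by nlinarith [sq_nonneg a, sq_nonneg b]
    have hb : b = 0 := by nlinarith [sq_nonneg a, sq_nonneg b]
    simp [ha, hb]
  set ρ := √(a ^ 2 + b ^ 2) with hρ
  have hpos : 0 < a ^ 2 + b ^ 2 := lt_of_le_of_ne (by positivity) (Ne.symm h)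
  have hρp : 0 < ρ := Real.sqrt_pos.2 hpos
  have hρ2 : ρ ^ 2 = a ^ 2 + b ^ 2 := Real.sq_sqrt hpos.le
  set w : ℂ := ⟨a / ρ, b / ρ⟩ with hw
  have hwn : ‖w‖ = 1 := by
    rw [← sq_eq_sq₀ (norm_nonneg _) zero_le_one, ← Complex.normSq_eq_norm_sq, Complex.normSq_apply, hw]
    simp only
    field_simp
    linarith
  let c : Circle := ⟨w, mem_sphere_zero_iff_norm.2 hwn⟩
  rw [I2_complex, I2_complex]
  rw [← (rotation c).measurePreserving.integral_comp (rotation c).toHomeomorph.measurableEmbedding]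
  congr 1
  ext z
  rw [LinearIsometryEquiv.norm_map, rotation_apply]
  have : a * ((c : ℂ) * z).re + b * ((c : ℂ) * z).im = ρ * z.re + 0 * z.im := by
    have : (c : ℂ) = w := rfl
    rw [this, Complex.mul_re, Complex.mul_im, hw]
    simp only
    field_simp
    linear_combination (-z.re) * hρ2
  rw [this]

lemma gg_zero_freq {x u : ℝ} (hu : u ^ 2 ≤ x) : gg x 0 u = 4 / 3 * √(x - u ^ 2) ^ 3 := by
  rw [gg_eq hu]
  set s := √(x - u ^ 2) with hs
  have hs2 : s ^ 2 = x - u ^ 2 := Real.sq_sqrt (by linarith)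
  simp only [mul_zero, zero_mul, cos_zero, mul_one]
  rw [intervalIntegral.integral_sub (by simp) ((by fun_prop : Continuous _).intervalIntegrable _ _),
    integral_pow, intervalIntegral.integral_const, ← hs2]
  simp only [smul_eq_mul]
  push_cast
  ring

lemma I2_radial {x : ℝ} (hx : 0 ≤ x) (ρ : ℝ) : I2 x ρ 0 = (Phi x ρ : ℂ) := by
  rw [← fourier_gg hx, fourier_even (gg_cont x 0) (gg_even x 0) (Real.sqrt_nonneg x) (gg_supp hx 0)]
  congr 1
  have hsub := intervalIntegral.integral_comp_mul_deriv (a := -(π/2)) (b := π/2)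
    (f := fun θ => √x * sin θ) (f' := fun θ => √x * cos θ)
    (g := fun u => gg x 0 u * cos (2 * π * ρ * u))
    (fun θ _ => (Real.hasDerivAt_sin θ).const_mul _) (by fun_prop)
    (by have := gg_cont x 0; fun_prop)
  simp only [sin_neg, sin_pi_div_two, mul_one, mul_neg] at hsub
  rw [← hsub, Phi, BB, osc, ← intervalIntegral.integral_const_mul]
  apply intervalIntegral.integral_congr
  intro θ hθ
  have hπ := Real.pi_pos
  rw [Set.uIcc_of_le (by linarith)] at hθ
  have hcos : 0 ≤ cos θ := Real.cos_nonneg_of_mem_Icc hθ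
  have hx2 : √x ^ 2 = x := Real.sq_sqrt hx
  have hle : (√x * sin θ) ^ 2 ≤ x := by
    rw [mul_pow, hx2]
    have := sin_sq_le_one θ
    nlinarith
  have hsq : √(x - (√x * sin θ) ^ 2) = √x * cos θ := by
    rw [mul_pow, hx2, show x - x * sin θ ^ 2 = x * cos θ ^ 2 by rw [cos_sq']; ring,
      Real.sqrt_mul hx, Real.sqrt_sq hcos]
  simp only [Function.comp]
  rw [gg_zero_freq hle, hsq, add_zero, show 2 * π * ρ * (√x * sin θ) = 2 * π * ρ * √x * sin θ by ring]
  have h4 : x ^ 2 = √x ^ 4 := by rw [← hx2]; rw [Real.sqrt_sq (Real.sqrt_nonneg x)]; ring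
  rw [h4]
  ring

lemma Phi_zero (x : ℝ) : Phi x 0 = π * x ^ 2 / 2 := by
  have : BB 0 = 3 * π / 8 := by
    rw [BB, osc]
    simp only [zero_mul, add_zero, cos_zero, mul_one]
    have h := integral_cos_pow (a := -(π/2)) (b := π/2) 2
    norm_num at h
    rw [h]
    ring
  rw [Phi]
  simp only [mul_zero, zero_mul]
  rw [this]; ring

lemma fourier_gg_int {x : ℝ} (hx : 0 ≤ x) (k l : ℤ) :
    𝓕 (fun u => (gg x l u : ℂ)) (k : ℝ) = (Phi x (rad (l, k)) : ℂ) := by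
  rw [fourier_gg hx, I2_rot, I2_radial hx, rad, add_comm]

lemma Phi_hasSum {x : ℝ} (hx : 1 / 2 ≤ x) :
    HasSum (fun p : ℤ × ℤ => Phi x (rad p)) (π * x ^ 2 / 2 + ∑' p, Phi0 x p) := by
  have h1 := (Phi0_summable hx).hasSum
  have h2 : HasSum (fun p : ℤ × ℤ => if p = 0 then π * x ^ 2 / 2 else 0) (π * x ^ 2 / 2) :=
    hasSum_ite_eq 0 _
  refine (h2.add h1).congr_fun ?_ |> fun h => h
  intro p
  by_cases hp : p = 0
  · subst hp
    simp [Phi0, rad, Phi_zero]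
  · simp [Phi0, hp]

lemma poisson2 {x : ℝ} (hx : 1 / 2 ≤ x) (l : ℤ) :
    ∑' a : ℤ, gg x l a = ∑' k : ℤ, Phi x (rad (l, k)) := by
  have hx0 : 0 ≤ x := by linarith
  have h := poisson_Ioc (h := fun u => (gg x l u : ℂ)) (by have := gg_cont x l; fun_prop) (R := √x)
    (fun v hv => by simp [gg_supp hx0 _ v hv]) (by
      simp_rw [fourier_gg_int hx0]
      exact Complex.hasSum_ofReal.2 ((Phi_hasSum hx).summable.prod_factor l).hasSum |>.summable)
  simp_rw [fourier_gg_int hx0] at h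
  rw [← Complex.ofReal_tsum, ← Complex.ofReal_tsum] at h
  exact_mod_cast h

/-- the finite box containing the disk -/
noncomputable def bx (x : ℝ) : Finset ℤ := Finset.Icc (-⌈x⌉) ⌈x⌉

lemma notMem_bx {x : ℝ} {a : ℤ} (ha : a ∉ bx x) : x ≤ (a : ℝ) ^ 2 := by
  rw [bx, Finset.mem_Icc, not_and_or, not_le, not_le] at ha
  have h1 : x ≤ ⌈x⌉ := Int.le_ceil x
  have h2 : (|a| : ℤ) ≤ a ^ 2 := by
    rw [← sq_abs]
    rcases eq_or_ne a 0 with rfl | h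
    · simp
    · nlinarith [Int.one_le_abs h]
  have h3 : ⌈x⌉ ≤ |a| := by
    rcases ha with h | h
    · have := neg_le_abs a; omega
    · have := le_abs_self a; omega
  have h4 : ((⌈x⌉ : ℤ) : ℝ) ≤ ((a ^ 2 : ℤ) : ℝ) := by exact_mod_cast h3.trans h2
  push_cast at h4
  linarith

theorem riesz_mean {x : ℝ} (hx : 1 / 2 ≤ x) :
    Summable (fun p : ℤ × ℤ => par x p.1 p.2) ∧
    ∑' p : ℤ × ℤ, par x p.1 p.2 = π * x ^ 2 / 2 + ∑' p, Phi0 x p := by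
  have hx0 : 0 ≤ x := by linarith
  have hs : Summable (fun p : ℤ × ℤ => par x p.1 p.2) := by
    apply summable_of_ne_finset_zero (s := bx x ×ˢ bx x)
    intro p hp
    rw [Finset.mem_product, not_and_or] at hp
    apply par_zero
    rcases hp with h | h
    · nlinarith [notMem_bx h, sq_nonneg (p.2 : ℝ)]
    · nlinarith [notMem_bx h, sq_nonneg (p.1 : ℝ)]
  refine ⟨hs, ?_⟩
  rw [hs.tsum_prod]
  simp only
  simp_rw [poisson1 hx0]
  have e1 : ∑' a : ℤ, ∑' l : ℤ, gg x l a = ∑ a ∈ bx x, ∑' l : ℤ, gg x l a := by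
    apply tsum_eq_sum
    intro a ha
    simp_rw [gg_zero _ (notMem_bx ha)]
    simp
  rw [e1, ← Summable.tsum_finsetSum (f := fun (a : ℤ) (l : ℤ) => gg x l a)
    (fun a _ => gg_summable hx0 a)]
  have e2 : ∀ l : ℤ, ∑ a ∈ bx x, gg x l a = ∑' k : ℤ, Phi x (rad (l, k)) := by
    intro l
    rw [← poisson2 hx]
    symm
    apply tsum_eq_sum
    intro a ha
    exact gg_zero _ (notMem_bx ha)
  simp_rw [e2]
  rw [← (Phi_hasSum hx).summable.tsum_prod, (Phi_hasSum hx).tsum_eq]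

def disk (x : ℝ) : Set (ℤ × ℤ) := {p | (p.1 : ℝ) ^ 2 + (p.2 : ℝ) ^ 2 ≤ x}

lemma disk_finite (x : ℝ) : (disk x).Finite := by
  apply Set.Finite.subset (bx (x + 1) ×ˢ bx (x + 1)).finite_toSet
  intro p hp
  have hp : (p.1 : ℝ) ^ 2 + (p.2 : ℝ) ^ 2 ≤ x := hp
  by_contra h
  rw [Finset.mem_coe, Finset.mem_product, not_and_or] at h
  rcases h with h | h
  · nlinarith [notMem_bx h, sq_nonneg (p.2 : ℝ)]
  · nlinarith [notMem_bx h, sq_nonneg (p.1 : ℝ)]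

lemma disk_card_le {a b : ℝ} (ha : 1 / 2 ≤ a) (hab : a ≤ b) :
    (b - a) * (disk a).ncard ≤ ∑' p : ℤ × ℤ, par b p.1 p.2 - ∑' p : ℤ × ℤ, par a p.1 p.2 := by
  have h1 := (riesz_mean (ha.trans hab)).1
  have h2 := (riesz_mean ha).1
  rw [← h1.tsum_sub h2, Set.ncard_eq_toFinset_card _ (disk_finite a)]
  calc _ = ∑ p ∈ (disk_finite a).toFinset, (b - a) := by rw [Finset.sum_const, nsmul_eq_mul, mul_comm]
    _ ≤ ∑ p ∈ (disk_finite a).toFinset, (par b p.1 p.2 - par a p.1 p.2) := by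
      apply Finset.sum_le_sum
      intro p hp
      have hp : (p.1 : ℝ) ^ 2 + (p.2 : ℝ) ^ 2 ≤ a := by
        have h := (Set.Finite.mem_toFinset _).1 hp
        exact h
      unfold par
      rw [max_eq_left (by linarith), max_eq_left (by linarith)]
      linarith
    _ ≤ _ := by
      apply (h1.sub h2).sum_le_tsum
      intro p _
      unfold par
      rw [sub_nonneg]
      gcongr

lemma le_disk_card {a b : ℝ} (ha : 1 / 2 ≤ a) (hab : a ≤ b) :
    ∑' p : ℤ × ℤ, par b p.1 p.2 - ∑' p : ℤ × ℤ, par a p.1 p.2 ≤ (b - a) * (disk b).ncard := by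
  have h1 := (riesz_mean (ha.trans hab)).1
  have h2 := (riesz_mean ha).1
  rw [← h1.tsum_sub h2, Set.ncard_eq_toFinset_card _ (disk_finite b)]
  rw [tsum_eq_sum (s := (disk_finite b).toFinset)]
  · calc _ ≤ ∑ p ∈ (disk_finite b).toFinset, (b - a) := by
          apply Finset.sum_le_sum
          intro p hp
          have hp : (p.1 : ℝ) ^ 2 + (p.2 : ℝ) ^ 2 ≤ b := by
            have h := (Set.Finite.mem_toFinset _).1 hp
            exact h
          unfold par
          rw [max_eq_left (a := b - _ - _) (by linarith)]
          linarith [le_max_left (a - (p.1 : ℝ) ^ 2 - (p.2 : ℝ) ^ 2) 0]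
      _ = _ := by rw [Finset.sum_const, nsmul_eq_mul, mul_comm]
  · intro p hp
    have hp : b < (p.1 : ℝ) ^ 2 + (p.2 : ℝ) ^ 2 := by
      by_contra h
      apply hp
      rw [Set.Finite.mem_toFinset]
      exact not_lt.1 h
    rw [par_zero hp.le, par_zero (by linarith), sub_zero]

theorem circle_count {x c : ℝ} (hc : 1 ≤ c) (hx : c ^ 3 = x) :
    |((disk x).ncard : ℝ) - π * x| ≤ 60000 * c := by
  have hcp : 0 < c := by linarith
  have hc3 : c ≤ x := by rw [← hx]; nlinarith [mul_pos hcp hcp]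
  have hπ := Real.pi_le_four
  have hπ0 := Real.pi_pos
  have hsq : ∀ y, 0 ≤ y → y ≤ 163840 * c ^ 4 → √y ≤ 405 * c ^ 2 := by
    intro y hy0 hy
    apply Real.sqrt_le_iff.2 ⟨by positivity, ?_⟩
    nlinarith [pow_pos hcp 4]
  have hx0 : 0 < x := by linarith
  have up := disk_card_le (a := x) (b := x + c / 2) (by linarith) (by linarith)
  have lo := le_disk_card (a := x - c / 2) (b := x) (by linarith) (by linarith)
  rw [(riesz_mean (x := x) (by linarith)).2, (riesz_mean (by linarith)).2] at up lo
  have d1 := Phi0_diff (a := x) (b := x + c / 2) (by linarith) (by linarith)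
  have d2 := Phi0_diff (a := x - c / 2) (b := x) (by linarith) (by linarith)
  have s1 := hsq (163840 * (x + c / 2 - x) * (x + c / 2)) (by ring_nf; positivity) (by
    rw [show 163840 * (x + c / 2 - x) * (x + c / 2) = 163840 * (c / 2) * (x + c / 2) by ring]
    calc _ ≤ 163840 * (c / 2) * (2 * x) := by gcongr; linarith
      _ = _ := by rw [← hx]; ring)
  have s2 := hsq (163840 * (x - (x - c / 2)) * x) (by
      rw [show 163840 * (x - (x - c / 2)) * x = 163840 * (c / 2) * x by ring]; positivity) (by
    rw [show 163840 * (x - (x - c / 2)) * x = 163840 * (c / 2) * x by ring]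
    rw [← hx]; nlinarith [pow_pos hcp 4])
  have e1 : x + c / 2 - x = c / 2 := by ring
  have e2 : x - (x - c / 2) = c / 2 := by ring
  have d1' := abs_le.1 (d1.trans (mul_le_mul_of_nonneg_left s1 (by norm_num : (0:ℝ) ≤ 64)))
  have d2' := abs_le.1 (d2.trans (mul_le_mul_of_nonneg_left s2 (by norm_num : (0:ℝ) ≤ 64)))
  rw [e1] at up
  rw [e2] at lo
  set N : ℝ := ((disk x).ncard : ℝ)
  rw [abs_le]
  have hc2 : 0 < c ^ 2 := by positivity
  constructor
  · have : 0 ≤ (c / 2) * (N - π * x + 60000 * c) := by nlinarith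
    nlinarith [nonneg_of_mul_nonneg_right this (by positivity)]
  · have : 0 ≤ (c / 2) * (60000 * c - (N - π * x)) := by nlinarith
    nlinarith [nonneg_of_mul_nonneg_right this (by positivity)]


noncomputable def giBasis : Module.Basis (Fin 2) ℤ GaussianInt :=
  Module.Basis.ofEquivFun
    { toFun := fun z => ![z.re, z.im]
      invFun := fun v => ⟨v 0, v 1⟩
      map_add' := fun a b => by ext i; fin_cases i <;> simp
      map_smul' := fun a b => by ext i; fin_cases i <;> simp
      left_inv := fun a => by ext <;> simp
      right_inv := fun a => by ext i; fin_cases i <;> simp }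

instance giFree : Module.Free ℤ GaussianInt := Module.Free.of_basis giBasis
instance giFinite : Module.Finite ℤ GaussianInt := Module.Finite.of_basis giBasis

lemma normI_eq (I : Ideal GaussianInt) : normI I = Ideal.absNorm I := by
  rw [Ideal.absNorm_apply, Submodule.cardQuot_apply]; rfl

lemma normI_mul (I J : Ideal GaussianInt) : normI (I * J) = normI I * normI J := by
  simp [normI_eq]

lemma normI_ne_zero {I : Ideal GaussianInt} (h : I ≠ ⊥) : normI I ≠ 0 := by
  rw [normI_eq, Ne, Ideal.absNorm_eq_zero_iff]; exact h

lemma normI_pos {I : Ideal GaussianInt} (h : I ≠ ⊥) : (0 : ℝ) < normI I := by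
  exact_mod_cast Nat.pos_of_ne_zero (normI_ne_zero h)

lemma normI_one_le {I : Ideal GaussianInt} (h : I ≠ ⊥) : (1 : ℝ) ≤ normI I := by
  exact_mod_cast Nat.pos_of_ne_zero (normI_ne_zero h)

lemma giNorm (z : GaussianInt) : Algebra.norm ℤ z = z.norm := by
  rw [Algebra.norm_eq_matrix_det giBasis, Matrix.det_fin_two]
  simp [Algebra.leftMulMatrix_eq_repr_mul, giBasis, Zsqrtd.norm_def]
  try ring

lemma normI_span (z : GaussianInt) :
    (normI (Ideal.span {z}) : ℝ) = (z.re : ℝ) ^ 2 + (z.im : ℝ) ^ 2 := by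
  rw [normI_eq, Ideal.absNorm_span_singleton, giNorm, GaussianInt.natCast_natAbs_norm]
  simp [Zsqrtd.norm_def]; ring

def idl (t : ℝ) : Set (Ideal GaussianInt) := {I | I ≠ ⊥ ∧ (normI I : ℝ) ≤ t}

lemma idl_finite (t : ℝ) : (idl t).Finite := by
  apply (Ideal.finite_setOfPred_absNorm_le (S := GaussianInt) ⌊t⌋₊).subset
  rintro I ⟨_, h⟩
  have := Nat.le_floor h
  rw [normI_eq] at this
  exact this

noncomputable def gen (I : Ideal GaussianInt) : GaussianInt := Submodule.IsPrincipal.generator I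

lemma span_gen (I : Ideal GaussianInt) : Ideal.span {gen I} = I := Ideal.span_singleton_generator I

lemma gen_ne_zero {I : Ideal GaussianInt} (h : I ≠ ⊥) : gen I ≠ 0 := by
  intro h0; apply h; rw [← span_gen I, h0]; simp

def giU : Finset GaussianInt := {1, -1, ⟨0, 1⟩, ⟨0, -1⟩}

lemma giU_card : giU.card = 4 := by decide

lemma mem_giU (z : GaussianInt) : z ∈ giU ↔ IsUnit z := by
  rw [← Zsqrtd.norm_eq_one_iff' (by norm_num)]
  constructor
  · intro h
    simp [giU] at h
    rcases h with rfl | rfl | rfl | rfl <;> simp [Zsqrtd.norm_def]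
  · intro h
    rw [Zsqrtd.norm_def] at h
    obtain ⟨a, b⟩ := z
    have h : a * a + b * b = 1 := by simpa using h
    have ha : a ≤ 1 := by nlinarith
    have ha' : -1 ≤ a := by nlinarith
    have hb : b ≤ 1 := by nlinarith
    have hb' : -1 ≤ b := by nlinarith
    interval_cases a <;> interval_cases b <;> first | omega | decide

noncomputable def phi (q : Ideal GaussianInt × GaussianInt) : ℤ × ℤ :=
  ((gen q.1 * q.2).re, (gen q.1 * q.2).im)

lemma span_mul_unit (I : Ideal GaussianInt) {u : GaussianInt} (hu : IsUnit u) :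
    Ideal.span {gen I * u} = I := by
  rw [Ideal.span_singleton_mul_right_unit hu, span_gen]

lemma phi_injOn (t : ℝ) : Set.InjOn phi (idl t ×ˢ (giU : Set GaussianInt)) := by
  rintro ⟨I, u⟩ ⟨hI, hu⟩ ⟨J, v⟩ ⟨hJ, hv⟩ h
  simp only [phi, Prod.mk.injEq] at h
  have h : gen I * u = gen J * v := Zsqrtd.ext h.1 h.2
  have hu := (mem_giU u).1 hu
  have hv := (mem_giU v).1 hv
  have hIJ : I = J := by rw [← span_mul_unit I hu, h, span_mul_unit J hv]
  subst hIJ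
  have := mul_left_cancel₀ (gen_ne_zero hI.1) h
  rw [this]

lemma disk_eq {t : ℝ} (ht : 0 ≤ t) :
    disk t = insert (0, 0) (phi '' (idl t ×ˢ (giU : Set GaussianInt))) := by
  ext ⟨a, b⟩
  constructor
  · intro h
    by_cases h0 : (a, b) = (0, 0)
    · left; exact h0
    right
    set z : GaussianInt := ⟨a, b⟩ with hz
    have hz0 : z ≠ 0 := by
      intro h1; apply h0
      have h2 := congrArg Zsqrtd.re h1
      have h3 := congrArg Zsqrtd.im h1
      simp [hz] at h2 h3
      simp [h2, h3]
    have hs := span_gen (Ideal.span {z})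
    rw [Ideal.span_singleton_eq_span_singleton] at hs
    obtain ⟨u, hu⟩ := hs
    refine ⟨(Ideal.span {z}, u), ⟨⟨?_, ?_⟩, ?_⟩, ?_⟩
    · simpa using hz0
    · show (normI (Ideal.span {z}) : ℝ) ≤ t
      rw [normI_span]; exact h
    · exact (mem_giU _).2 u.isUnit
    · simp only [phi]; rw [hu]
  · rintro (h | ⟨⟨I, u⟩, ⟨hI, hu⟩, h⟩)
    · rw [h]; simpa [disk] using ht
    · simp only [phi, Prod.mk.injEq] at h
      have h2 := normI_span (gen I * u)
      rw [span_mul_unit I ((mem_giU u).1 hu), h.1, h.2] at h2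
      show (a : ℝ) ^ 2 + (b : ℝ) ^ 2 ≤ t
      rw [← h2]; exact hI.2

lemma disk_card {t : ℝ} (ht : 0 ≤ t) : (disk t).ncard = 4 * (idl t).ncard + 1 := by
  rw [disk_eq ht, Set.ncard_insert_of_notMem _ (((idl_finite t).prod (Finset.finite_toSet _)).image _),
    Set.InjOn.ncard_image (phi_injOn t),
    Set.ncard_prod, Set.ncard_coe_finset, giU_card, mul_comm]
  · rintro ⟨⟨I, u⟩, ⟨hI, hu⟩, h⟩
    simp only [phi, Prod.mk.injEq] at h
    have h1 : gen I * u = 0 := Zsqrtd.ext h.1 h.2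
    rcases mul_eq_zero.1 h1 with h2 | h2
    · exact gen_ne_zero hI.1 h2
    · have := (mem_giU u).1 hu
      rw [h2] at this
      exact not_isUnit_zero this

lemma idl_count {t : ℝ} (ht : 1 ≤ t) :
    |((idl t).ncard : ℝ) - π / 4 * t| ≤ 20000 * t ^ ((1 : ℝ) / 3) := by
  have hc : (1 : ℝ) ≤ t ^ ((1 : ℝ) / 3) := Real.one_le_rpow ht (by norm_num)
  have hx : (t ^ ((1 : ℝ) / 3)) ^ 3 = t := by
    rw [← Real.rpow_natCast, ← Real.rpow_mul (by linarith)]; norm_num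
  have h := circle_count hc hx
  rw [disk_card (by linarith)] at h
  push_cast at h
  rw [abs_le] at h ⊢
  constructor <;> linarith [h.1, h.2]

lemma idl_empty {t : ℝ} (ht : t < 1) : idl t = ∅ := by
  ext I
  simp only [Set.mem_empty_iff_false, iff_false]
  rintro ⟨h, h2⟩
  linarith [normI_one_le h]

lemma sq_count : ∃ B : ℝ, 0 < B ∧ ∀ t : ℝ, 0 < t →
    |((idl t).ncard : ℝ) ^ 2 - π ^ 2 / 16 * t ^ 2| ≤ B * t ^ ((4 : ℝ) / 3) := by
  refine ⟨20000 * 20002, by norm_num, fun t ht => ?_⟩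
  have hpi := Real.pi_pos
  have hpi4 := Real.pi_lt_four
  rcases lt_or_ge t 1 with h1 | h1
  · rw [idl_empty h1]
    have h2 : t ^ 2 ≤ t ^ ((4 : ℝ) / 3) := by
      rw [← Real.rpow_natCast]
      exact Real.rpow_le_rpow_of_exponent_ge ht h1.le (by norm_num)
    have h3 : π ^ 2 / 16 ≤ 1 := by nlinarith
    have h4 : 0 < t ^ ((4 : ℝ) / 3) := by positivity
    simp only [Set.ncard_empty, Nat.cast_zero]
    rw [abs_le]
    constructor
    · nlinarith [sq_nonneg t]
    · have : 0 ≤ π ^ 2 / 16 * t ^ 2 := by positivity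
      nlinarith
  · have h := idl_count h1
    set c := t ^ ((1 : ℝ) / 3) with hcdef
    have hc : 1 ≤ c := Real.one_le_rpow h1 (by norm_num)
    have hx : c ^ 3 = t := by
      rw [hcdef, ← Real.rpow_natCast, ← Real.rpow_mul (by linarith)]; norm_num
    have h43 : t ^ ((4 : ℝ) / 3) = c * t := by
      have : (4 : ℝ) / 3 = 1 / 3 + 1 := by norm_num
      rw [this, Real.rpow_add ht, Real.rpow_one]
    rw [h43]
    have hct : c ≤ t := by rw [← hx]; nlinarith [sq_nonneg (c - 1), sq_nonneg c]
    set R : ℝ := ((idl t).ncard : ℝ)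
    have e : R ^ 2 - π ^ 2 / 16 * t ^ 2 = (R - π / 4 * t) * (R - π / 4 * t + π / 2 * t) := by ring
    rw [e, abs_mul]
    have h5 : |R - π / 4 * t + π / 2 * t| ≤ 20002 * t := by
      rw [abs_le] at h ⊢
      constructor <;> nlinarith [h.1, h.2]
    calc _ ≤ (20000 * c) * (20002 * t) := by gcongr
      _ = _ := by ring


abbrev Pr := {p : Ideal GaussianInt // Prime p}

def gd (S : Finset Pr) (I : Ideal GaussianInt) : Prop := ∀ p ∈ S, ¬ (p.1 ∣ I)
def gp (S : Finset Pr) (q : Ideal GaussianInt × Ideal GaussianInt) : Prop :=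
  ∀ p ∈ S, ¬ (p.1 ∣ q.1 ∧ p.1 ∣ q.2)

def FS (S : Finset Pr) (t : ℝ) : Set (Ideal GaussianInt × Ideal GaussianInt) := {q ∈ P t | gp S q}

lemma P_eq (t : ℝ) : P t = idl t ×ˢ idl t := by
  ext q
  simp only [P, idl, Set.mem_prod, Set.mem_setOf_eq]
  tauto

lemma P_finite (t : ℝ) : (P t).Finite := by
  rw [P_eq]; exact (idl_finite t).prod (idl_finite t)

lemma FS_finite (S : Finset Pr) (t : ℝ) : (FS S t).Finite := (P_finite t).subset (Set.sep_subset _ _)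

lemma Pr_ne_bot (p : Pr) : p.1 ≠ ⊥ := p.2.ne_zero

lemma dvd_mul_iff {p q : Pr} (h : q ≠ p) (I : Ideal GaussianInt) : q.1 ∣ p.1 * I ↔ q.1 ∣ I := by
  constructor
  · intro h1
    rcases q.2.dvd_or_dvd h1 with h2 | h2
    · exfalso
      apply h
      rw [Prime.dvd_prime_iff_associated q.2 p.2, associated_iff_eq] at h2
      exact Subtype.ext h2
    · exact h2
  · exact fun h1 => Dvd.dvd.mul_left h1 _

lemma mul_idl {K I : Ideal GaussianInt} (hK : K ≠ ⊥) (t : ℝ) :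
    K * I ∈ idl t ↔ I ∈ idl (t / normI K) := by
  simp only [idl, Set.mem_setOf_eq]
  rw [normI_mul, le_div_iff₀ (normI_pos hK)]
  push_cast
  rw [mul_comm (normI K : ℝ)]
  have : K * I ≠ ⊥ ↔ I ≠ ⊥ := by
    rw [← Ideal.zero_eq_bot, mul_ne_zero_iff]
    exact and_iff_right hK
  rw [this]

noncomputable def mp (K : Ideal GaussianInt) (q : Ideal GaussianInt × Ideal GaussianInt) :
    Ideal GaussianInt × Ideal GaussianInt := (K * q.1, K * q.2)

lemma mp_inj {K : Ideal GaussianInt} (hK : K ≠ ⊥) : Function.Injective (mp K) := by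
  rintro ⟨a, b⟩ ⟨c, d⟩ h
  simp only [mp, Prod.mk.injEq] at h
  rw [mul_left_cancel₀ hK h.1, mul_left_cancel₀ hK h.2]

open scoped Classical in
lemma FS_insert (S : Finset Pr) (p : Pr) (hp : p ∉ S) (t : ℝ) :
    ((FS S t).ncard : ℝ) = (FS (insert p S) t).ncard + (FS S (t / normI p.1)).ncard := by
  have h : FS S t = FS (insert p S) t ∪ mp p.1 '' FS S (t / normI p.1) := by
    ext ⟨I, J⟩
    constructor
    · rintro ⟨h1, h2⟩
      by_cases h3 : p.1 ∣ I ∧ p.1 ∣ J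
      · right
        obtain ⟨⟨A, rfl⟩, ⟨B, rfl⟩⟩ := h3
        refine ⟨(A, B), ⟨?_, ?_⟩, rfl⟩
        · rw [P_eq] at h1 ⊢
          exact ⟨(mul_idl (Pr_ne_bot p) t).1 h1.1, (mul_idl (Pr_ne_bot p) t).1 h1.2⟩
        · intro q hq hq2
          exact h2 q hq ⟨Dvd.dvd.mul_left hq2.1 _, Dvd.dvd.mul_left hq2.2 _⟩
      · left
        refine ⟨h1, ?_⟩
        intro q hq
        rcases Finset.mem_insert.1 hq with rfl | hq
        · exact h3
        · exact h2 q hq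
    · rintro (⟨h1, h2⟩ | ⟨⟨A, B⟩, ⟨h1, h2⟩, h3⟩)
      · exact ⟨h1, fun q hq => h2 q (Finset.mem_insert_of_mem hq)⟩
      · rw [← h3]
        refine ⟨?_, ?_⟩
        · rw [P_eq] at h1 ⊢
          exact ⟨(mul_idl (Pr_ne_bot p) t).2 h1.1, (mul_idl (Pr_ne_bot p) t).2 h1.2⟩
        · intro q hq hq2
          have hqp : q ≠ p := fun h => hp (h ▸ hq)
          simp only [mp, dvd_mul_iff hqp] at hq2
          exact h2 q hq hq2
  rw [h, Set.ncard_union_eq ?_ (FS_finite _ _) ((FS_finite _ _).image _),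
    Set.ncard_image_of_injective _ (mp_inj (Pr_ne_bot p))]
  · push_cast; rfl
  · rw [Set.disjoint_left]
    rintro _ ⟨_, h2⟩ ⟨⟨A, B⟩, _, rfl⟩
    exact h2 p (Finset.mem_insert_self _ _) ⟨dvd_mul_right _ _, dvd_mul_right _ _⟩

lemma FS_empty (t : ℝ) : ((FS ∅ t).ncard : ℝ) = ((idl t).ncard : ℝ) ^ 2 := by
  have : FS ∅ t = idl t ×ˢ idl t := by
    rw [← P_eq]; ext q; simp [FS, gp]
  rw [this, Set.ncard_prod]; push_cast; ring

lemma FS_bound {B : ℝ} (hB : ∀ t : ℝ, 0 < t →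
    |((idl t).ncard : ℝ) ^ 2 - π ^ 2 / 16 * t ^ 2| ≤ B * t ^ ((4 : ℝ) / 3)) (S : Finset Pr) :
    ∀ t : ℝ, 0 < t → |((FS S t).ncard : ℝ) -
      π ^ 2 / 16 * (∏ p ∈ S, (1 - 1 / (normI p.1 : ℝ) ^ 2)) * t ^ 2| ≤
      B * t ^ ((4 : ℝ) / 3) * ∏ p ∈ S, (1 + (normI p.1 : ℝ) ^ (-((4 : ℝ) / 3))) := by
  classical
  induction S using Finset.induction_on with
  | empty => intro t ht; rw [FS_empty]; simpa using hB t ht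
  | insert p S hp ih =>
    intro t ht
    have hN := normI_pos (Pr_ne_bot p)
    have h1 := ih t ht
    have h2 := ih (t / normI p.1) (by positivity)
    have h3 := FS_insert S p hp t
    rw [Finset.prod_insert hp, Finset.prod_insert hp]
    rw [Real.div_rpow ht.le hN.le] at h2
    rw [Real.rpow_neg hN.le]
    set N : ℝ := (normI p.1 : ℝ)
    set Q := ∏ p ∈ S, (1 - 1 / (normI p.1 : ℝ) ^ 2)
    set W := ∏ p ∈ S, (1 + (normI p.1 : ℝ) ^ (-((4 : ℝ) / 3)))
    set a : ℝ := ((FS S t).ncard : ℝ)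
    set b : ℝ := ((FS S (t / N)).ncard : ℝ)
    have e1 : ((FS (insert p S) t).ncard : ℝ) = a - b := by linarith
    rw [e1]
    have e2 : a - b - π ^ 2 / 16 * ((1 - 1 / N ^ 2) * Q) * t ^ 2 =
      (a - π ^ 2 / 16 * Q * t ^ 2) - (b - π ^ 2 / 16 * Q * (t / N) ^ 2) := by
      field_simp; ring
    rw [e2]
    calc _ ≤ _ := abs_sub _ _
      _ ≤ _ := add_le_add h1 h2
      _ = _ := by ring

lemma normI_bot : normI ⊥ = 0 := by rw [normI_eq, Ideal.absNorm_eq_zero_iff]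

lemma normI_top : normI ⊤ = 1 := by rw [normI_eq, Ideal.absNorm_eq_one_iff]

lemma norm_summable {s : ℝ} (hs : 1 < s) :
    Summable (fun I : Ideal GaussianInt => (normI I : ℝ) ^ (-s)) := by
  have h := EisensteinSeries.summable_one_div_norm_rpow (k := 2 * s) (by linarith)
  have hinj : Function.Injective
      (fun I : Ideal GaussianInt => (![(gen I).re, (gen I).im] : Fin 2 → ℤ)) := by
    intro I J hIJ
    have h0 := congrFun hIJ 0
    have h1 := congrFun hIJ 1
    simp at h0 h1
    rw [← span_gen I, ← span_gen J, Zsqrtd.ext h0 h1]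
  refine Summable.of_nonneg_of_le (fun I => by positivity) (fun I => ?_) (h.comp_injective hinj)
  by_cases hI : I = ⊥
  · rw [hI, normI_bot]
    simp only [Function.comp, Nat.cast_zero]
    rw [Real.zero_rpow (by linarith)]
    positivity
  · set x : Fin 2 → ℤ := ![(gen I).re, (gen I).im] with hx
    have hN := normI_span (gen I)
    rw [span_gen] at hN
    have hx0 : x ≠ 0 := by
      intro h
      have h0 := congrFun h 0
      have h1 := congrFun h 1
      simp [hx] at h0 h1
      exact gen_ne_zero hI (Zsqrtd.ext h0 h1)
    have hxp : 0 < ‖x‖ := norm_pos_iff.2 hx0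
    have hle : ‖x‖ ^ 2 ≤ normI I := by
      rw [hN]
      have : ‖x‖ ≤ √(((gen I).re : ℝ) ^ 2 + ((gen I).im : ℝ) ^ 2) := by
        rw [pi_norm_le_iff_of_nonneg (Real.sqrt_nonneg _)]
        intro i
        apply Real.le_sqrt_of_sq_le
        rw [Int.norm_eq_abs, sq_abs]
        fin_cases i
        · simp [hx]; positivity
        · simp [hx]; positivity
      calc ‖x‖ ^ 2 ≤ _ := pow_le_pow_left₀ (norm_nonneg _) this 2
        _ = _ := Real.sq_sqrt (by positivity)
    show (normI I : ℝ) ^ (-s) ≤ ‖x‖ ^ (-(2 * s))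
    have e : ‖x‖ ^ (-(2 * s)) = (‖x‖ ^ 2) ^ (-s) := by
      rw [← Real.rpow_natCast, ← Real.rpow_mul hxp.le]; congr 1; push_cast; ring
    rw [e]
    exact Real.rpow_le_rpow_of_nonpos (by positivity) hle (by linarith)

lemma sq_summable : Summable (fun I : Ideal GaussianInt => 1 / (normI I : ℝ) ^ 2) := by
  refine (norm_summable (s := 2) (by norm_num)).congr (fun I => ?_)
  rw [Real.rpow_neg (by positivity), one_div]
  norm_cast

lemma zeta_eq : zetaQi2 = ∑' I : Ideal GaussianInt, 1 / (normI I : ℝ) ^ 2 := by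
  unfold zetaQi2
  apply tsum_subtype_eq_of_support_subset (f := fun I : Ideal GaussianInt => 1 / (normI I : ℝ) ^ 2)
    (s := {I | I ≠ ⊥})
  intro I hI h
  apply hI
  simp only [h, normI_bot]
  simp

open scoped Classical in
noncomputable def fz (S : Finset Pr) (I : Ideal GaussianInt) : ℝ :=
  if gd S I then 1 / (normI I : ℝ) ^ 2 else 0

lemma fz_nonneg (S : Finset Pr) (I : Ideal GaussianInt) : 0 ≤ fz S I := by
  unfold fz; split_ifs <;> positivity

lemma fz_le (S : Finset Pr) (I : Ideal GaussianInt) : fz S I ≤ 1 / (normI I : ℝ) ^ 2 := by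
  unfold fz; split_ifs
  · exact le_rfl
  · positivity

lemma fz_summable (S : Finset Pr) : Summable (fz S) :=
  Summable.of_nonneg_of_le (fz_nonneg S) (fz_le S) sq_summable

open scoped Classical in
lemma fz_insert (S : Finset Pr) (p : Pr) (hp : p ∉ S) :
    ∑' I, fz (insert p S) I = (1 - 1 / (normI p.1 : ℝ) ^ 2) * ∑' I, fz S I := by
  have h1 : ∀ I, fz S I = fz (insert p S) I + (if p.1 ∣ I then fz S I else 0) := by
    intro I
    have : gd (insert p S) I ↔ ¬ p.1 ∣ I ∧ gd S I := by simp [gd]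
    unfold fz
    rw [this]
    by_cases h : p.1 ∣ I <;> simp [h]
  have h2 : ∑' I, (if p.1 ∣ I then fz S I else 0) = 1 / (normI p.1 : ℝ) ^ 2 * ∑' I, fz S I := by
    have hinj : Function.Injective (fun I : Ideal GaussianInt => p.1 * I) :=
      fun a b h => mul_left_cancel₀ (Pr_ne_bot p) h
    rw [← hinj.tsum_eq, ← tsum_mul_left]
    · apply tsum_congr
      intro I
      rw [if_pos (dvd_mul_right _ _)]
      have : gd S (p.1 * I) ↔ gd S I := by
        unfold gd
        refine forall₂_congr fun q hq => ?_
        rw [dvd_mul_iff]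
        exact fun h => hp (h ▸ hq)
      unfold fz
      rw [this, normI_mul]
      split_ifs
      · push_cast; rw [mul_pow, one_div_mul_one_div]
      · simp
    · intro I hI
      by_cases h : p.1 ∣ I
      · obtain ⟨A, rfl⟩ := h; exact ⟨A, rfl⟩
      · simp [h] at hI
  have h3 : Summable (fun I => if p.1 ∣ I then fz S I else 0) := by
    refine Summable.of_nonneg_of_le (fun I => ?_) (fun I => ?_) (fz_summable S)
    · split_ifs
      · exact fz_nonneg S I
      · exact le_rfl
    · split_ifs
      · exact le_rfl
      · exact fz_nonneg S I
  have h4 : ∑' I, fz S I = ∑' I, fz (insert p S) I + ∑' I, (if p.1 ∣ I then fz S I else 0) := by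
    rw [← (fz_summable _).tsum_add h3]
    exact tsum_congr h1
  rw [h2] at h4
  linarith

lemma fz_prod (S : Finset Pr) :
    ∑' I, fz S I = zetaQi2 * ∏ p ∈ S, (1 - 1 / (normI p.1 : ℝ) ^ 2) := by
  classical
  induction S using Finset.induction_on with
  | empty => rw [zeta_eq]; simp [fz, gd]
  | insert p S hp ih => rw [fz_insert S p hp, ih, Finset.prod_insert hp]; ring

lemma exists_prime {I : Ideal GaussianInt} (h0 : I ≠ ⊥) (h1 : I ≠ ⊤) : ∃ p : Pr, p.1 ∣ I := by
  obtain ⟨M, hM, hle⟩ := Ideal.exists_le_maximal I h1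
  have hM0 : M ≠ ⊥ := by
    rintro rfl; exact h0 (le_bot_iff.1 hle)
  exact ⟨⟨M, (Ideal.prime_iff_isPrime hM0).2 hM.isPrime⟩, Ideal.dvd_iff_le.2 hle⟩

lemma fz_tendsto : Filter.Tendsto (fun S : Finset Pr => ∑' I, fz S I) Filter.atTop (nhds 1) := by
  classical
  have h : Filter.Tendsto (fun S : Finset Pr => ∑' I, fz S I) Filter.atTop
      (nhds (∑' I : Ideal GaussianInt, if I = ⊤ then (1 : ℝ) else 0)) := by
    apply tendsto_tsum_of_dominated_convergence sq_summable
    · intro I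
      by_cases h1 : I = ⊤
      · subst h1
        apply tendsto_const_nhds.congr
        intro S
        have : gd S ⊤ := by
          intro p _ hp2
          exact p.2.not_unit (isUnit_of_dvd_unit hp2 (by rw [← Ideal.one_eq_top]; exact isUnit_one))
        simp [fz, this, normI_top]
      · by_cases h0 : I = ⊥
        · subst h0
          apply tendsto_const_nhds.congr
          intro S
          simp [fz, normI_bot]
        · obtain ⟨p, hp⟩ := exists_prime h0 h1
          apply tendsto_const_nhds.congr'
          filter_upwards [Filter.eventually_ge_atTop ({p} : Finset Pr)] with S hS
          have : ¬ gd S I := fun h => h p (hS (Finset.mem_singleton_self p)) hp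
          simp [fz, this, h1]
    · filter_upwards with S I
      rw [Real.norm_of_nonneg (fz_nonneg S I)]
      exact fz_le S I
  rwa [tsum_ite_eq] at h

lemma zeta_pos : 0 < zetaQi2 := by
  rw [zeta_eq]
  refine sq_summable.tsum_pos (fun I => by positivity) ⊤ ?_
  rw [normI_top]; norm_num

lemma prod_tendsto : Filter.Tendsto
    (fun S : Finset Pr => ∏ p ∈ S, (1 - 1 / (normI p.1 : ℝ) ^ 2)) Filter.atTop
    (nhds (1 / zetaQi2)) := by
  refine (fz_tendsto.div_const zetaQi2).congr (fun S => ?_)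
  rw [fz_prod]
  field_simp [zeta_pos.ne']

def CP (t : ℝ) : Set (Ideal GaussianInt × Ideal GaussianInt) := {q ∈ P t | q.1 ⊔ q.2 = ⊤}

lemma FS_eventually (t : ℝ) : ∀ᶠ S : Finset Pr in Filter.atTop, FS S t = CP t := by
  have hfin : (Subtype.val ⁻¹' (idl t) : Set Pr).Finite :=
    (idl_finite t).preimage Subtype.val_injective.injOn
  filter_upwards [Filter.eventually_ge_atTop hfin.toFinset] with S hS
  ext ⟨I, J⟩
  constructor
  · rintro ⟨h1, h2⟩
    refine ⟨h1, ?_⟩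
    by_contra h3
    have h0 : I ⊔ J ≠ ⊥ := fun h => h1.1 (sup_eq_bot_iff.1 h).1
    obtain ⟨p, hp⟩ := exists_prime h0 h3
    have hle := Ideal.dvd_iff_le.1 hp
    have hpI : p.1 ∣ I := Ideal.dvd_iff_le.2 (le_sup_left.trans hle)
    have hpJ : p.1 ∣ J := Ideal.dvd_iff_le.2 (le_sup_right.trans hle)
    refine h2 p (hS ?_) ⟨hpI, hpJ⟩
    rw [Set.Finite.mem_toFinset]
    refine ⟨Pr_ne_bot p, le_trans ?_ h1.2.2.1⟩
    obtain ⟨A, hA⟩ := hpI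
    have : normI p.1 ∣ normI I := by rw [hA, normI_mul]; exact dvd_mul_right _ _
    exact_mod_cast Nat.le_of_dvd (Nat.pos_of_ne_zero (normI_ne_zero h1.1)) this
  · rintro ⟨h1, h2⟩
    refine ⟨h1, ?_⟩
    rintro p _ ⟨hI, hJ⟩
    have hle : (I ⊔ J : Ideal GaussianInt) ≤ p.1 :=
      sup_le (Ideal.dvd_iff_le.1 hI) (Ideal.dvd_iff_le.1 hJ)
    have h2 : I ⊔ J = ⊤ := h2
    rw [h2, top_le_iff] at hle
    exact p.2.not_unit (by rw [hle, ← Ideal.one_eq_top]; exact isUnit_one)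

lemma CP_bound : ∃ B : ℝ, 0 < B ∧ ∀ t : ℝ, 0 < t →
    |((CP t).ncard : ℝ) - π ^ 2 / 16 * (1 / zetaQi2) * t ^ 2| ≤ B * t ^ ((4 : ℝ) / 3) := by
  obtain ⟨B, hB0, hB⟩ := sq_count
  have hsum : Summable (fun p : Pr => (normI p.1 : ℝ) ^ (-((4 : ℝ) / 3))) :=
    (norm_summable (s := 4 / 3) (by norm_num)).comp_injective Subtype.val_injective
  refine ⟨B * Real.exp (∑' p : Pr, (normI p.1 : ℝ) ^ (-((4 : ℝ) / 3))), by positivity,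
    fun t ht => ?_⟩
  have hlim : Filter.Tendsto (fun S : Finset Pr => |((CP t).ncard : ℝ) -
      π ^ 2 / 16 * (∏ p ∈ S, (1 - 1 / (normI p.1 : ℝ) ^ 2)) * t ^ 2|) Filter.atTop
      (nhds |((CP t).ncard : ℝ) - π ^ 2 / 16 * (1 / zetaQi2) * t ^ 2|) :=
    (((prod_tendsto.const_mul _).mul_const _).const_sub _).abs
  refine le_of_tendsto hlim ?_
  filter_upwards [FS_eventually t] with S hS
  have h := FS_bound hB S t ht
  rw [hS] at h
  refine h.trans ?_
  have h2 : ∏ p ∈ S, (1 + (normI p.1 : ℝ) ^ (-((4 : ℝ) / 3))) ≤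
      Real.exp (∑' p : Pr, (normI p.1 : ℝ) ^ (-((4 : ℝ) / 3))) := by
    calc _ ≤ ∏ p ∈ S, Real.exp ((normI p.1 : ℝ) ^ (-((4 : ℝ) / 3))) := by
          apply Finset.prod_le_prod
          · intro p _; positivity
          · intro p _
            rw [add_comm]; exact Real.add_one_le_exp _
      _ = Real.exp (∑ p ∈ S, (normI p.1 : ℝ) ^ (-((4 : ℝ) / 3))) := (Real.exp_sum _ _).symm
      _ ≤ _ := by
          apply Real.exp_le_exp.2
          exact hsum.sum_le_tsum S (fun p _ => by positivity)
  calc _ ≤ B * t ^ ((4 : ℝ) / 3) * Real.exp (∑' p : Pr, (normI p.1 : ℝ) ^ (-((4 : ℝ) / 3))) := by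
        gcongr
    _ = _ := by ring

lemma pairs_eq (x : ℝ) {K : Ideal GaussianInt} (hK : K ≠ ⊥) :
    {p ∈ P x | p.1 ⊔ p.2 = K} = mp K '' CP (x / normI K) := by
  ext ⟨I, J⟩
  constructor
  · rintro ⟨h1, h2⟩
    have h2 : I ⊔ J = K := h2
    obtain ⟨A, hA⟩ : K ∣ I := Ideal.dvd_iff_le.2 (h2 ▸ le_sup_left)
    obtain ⟨B, hB⟩ : K ∣ J := Ideal.dvd_iff_le.2 (h2 ▸ le_sup_right)
    refine ⟨(A, B), ⟨?_, ?_⟩, ?_⟩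
    · rw [P_eq] at h1 ⊢
      refine ⟨(mul_idl hK x).1 ?_, (mul_idl hK x).1 ?_⟩
      · rw [← hA]; exact h1.1
      · rw [← hB]; exact h1.2
    · rw [hA, hB, ← Ideal.mul_sup] at h2
      have h3 : K * (A ⊔ B) = K * ⊤ := by rw [h2, Ideal.mul_top]
      exact mul_left_cancel₀ hK h3
    · rw [hA, hB]; rfl
  · rintro ⟨⟨A, B⟩, ⟨h1, h2⟩, h3⟩
    rw [← h3]
    refine ⟨?_, ?_⟩
    · rw [P_eq] at h1 ⊢
      exact ⟨(mul_idl hK x).2 h1.1, (mul_idl hK x).2 h1.2⟩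
    · have h2 : A ⊔ B = ⊤ := h2
      show K * A ⊔ K * B = K
      rw [← Ideal.mul_sup, h2, Ideal.mul_top]

theorem gcdPairCount_asymptotic :
    ∃ C : ℝ, 0 < C ∧ ∀ x : ℝ, 1 ≤ x → ∀ K : Ideal GaussianInt, K ≠ ⊥ →
      |({p ∈ P x | p.1 ⊔ p.2 = K}.ncard : ℝ) -
          π ^ 2 * x ^ 2 / (16 * zetaQi2 * (normI K : ℝ) ^ 2)|
        ≤ C * x ^ ((4 : ℝ) / 3) / (normI K : ℝ) ^ ((4 : ℝ) / 3) := by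
  obtain ⟨B, hB0, hB⟩ := CP_bound
  refine ⟨B, hB0, fun x hx K hK => ?_⟩
  have hN := normI_pos hK
  have hz := zeta_pos
  have h := hB (x / normI K) (by positivity)
  rw [pairs_eq x hK, Set.ncard_image_of_injective _ (mp_inj hK)]
  rw [Real.div_rpow (by linarith) hN.le] at h
  have e : π ^ 2 * x ^ 2 / (16 * zetaQi2 * (normI K : ℝ) ^ 2) =
      π ^ 2 / 16 * (1 / zetaQi2) * (x / normI K) ^ 2 := by
    field_simp
  rw [e, mul_div_assoc]
  exact h
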